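/- arXiv:2109.04522 — 11 statements merged into one kernel-verified Lean document; each statement's English description precedes it below -/
import Mathlib

section
/- Let {V_k}_{k≥0} be a sequence of non-negative real numbers satisfying V_{k+1} ≤ q·V_k + p·max_{(k−τ_k)_+ ≤ ℓ ≤ k} V_ℓ for all k ≥ 0, where q and p are non-negative constants and the delays satisfy 0 ≤ τ_k ≤ τ for some non-negative integer τ. If q + p < 1, then V_k ≤ ρ^k · V_0 for all k ≥ 0, where ρ = (q + p)^{1/(1+τ)}. -/
/-- Lemma 1: linear convergence of non-negative sequences satisfying a delayed
recurrence with bounded delays.  Here `(k - τk k)` uses truncated natural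
subtraction, which realizes `(k − τ_k)_+`, and the maximum over
`(k−τ_k)_+ ≤ ℓ ≤ k` is `Finset.sup'` over `Finset.Icc`. -/
theorem sequence_bounded_delay_linear_rate
    (V : ℕ → ℝ) (q p : ℝ) (τ : ℕ) (τk : ℕ → ℕ)
    (hV : ∀ k, 0 ≤ V k) (hq : 0 ≤ q) (hp : 0 ≤ p)
    (hτ : ∀ k, τk k ≤ τ)
    (hrec : ∀ k, V (k + 1) ≤ q * V k +
      p * (Finset.Icc (k - τk k) k).sup'
            (Finset.nonempty_Icc.mpr (Nat.sub_le k (τk k))) V)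
    (hqp : q + p < 1) :
    ∀ k, V k ≤ ((q + p) ^ ((1 : ℝ) / (1 + (τ : ℝ)))) ^ k * V 0 := by
  have hs : 0 ≤ q + p := add_nonneg hq hp
  have hpos : (0 : ℝ) < 1 + (τ : ℝ) := by positivity
  obtain ⟨r, hr⟩ : ∃ r, r = (q + p) ^ ((1 : ℝ) / (1 + (τ : ℝ))) := ⟨_, rfl⟩
  rw [← hr]
  have hr0 : 0 ≤ r := hr ▸ Real.rpow_nonneg hs _
  have hr1 : r ≤ 1 := hr ▸ Real.rpow_le_one hs hqp.le (by positivity)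
  have hrp : r ^ (1 + τ) = q + p := by
    rw [hr, ← Real.rpow_natCast, ← Real.rpow_mul hs]
    push_cast
    rw [one_div_mul_cancel hpos.ne', Real.rpow_one]
  intro k
  induction k using Nat.strong_induction_on with
  | _ n ih =>
    rcases n with _ | k
    · simp
    · have hb : ∀ l, k - τ ≤ l → l ≤ k → V l ≤ r ^ (k - τ) * V 0 := fun l h1 h2 =>
        (ih l (by omega)).trans
          (mul_le_mul_of_nonneg_right (pow_le_pow_of_le_one hr0 hr1 h1) (hV 0))
      have hsup : (Finset.Icc (k - τk k) k).sup'
            (Finset.nonempty_Icc.mpr (Nat.sub_le k (τk k))) V ≤ r ^ (k - τ) * V 0 := by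
        apply Finset.sup'_le
        intro l hl
        rw [Finset.mem_Icc] at hl
        have := hτ k
        exact hb l (by omega) hl.2
      calc V (k + 1) ≤ _ := hrec k
        _ ≤ q * (r ^ (k - τ) * V 0) + p * (r ^ (k - τ) * V 0) :=
          add_le_add (mul_le_mul_of_nonneg_left (hb k (Nat.sub_le _ _) le_rfl) hq)
            (mul_le_mul_of_nonneg_left hsup hp)
        _ = r ^ (1 + τ + (k - τ)) * V 0 := by rw [pow_add, hrp]; ring
        _ ≤ r ^ (k + 1) * V 0 :=
          mul_le_mul_of_nonneg_right (pow_le_pow_of_le_one hr0 hr1 (by omega)) (hV 0)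
end

section
/- Let {V_k}_{k≥0} be a sequence of non-negative real numbers satisfying V_{k+1} ≤ q·V_k + p·max_{(k−τ_k)_+ ≤ ℓ ≤ k} V_ℓ for all k ≥ 0, where q and p are non-negative constants. Suppose the delay sequence {τ_k} of non-negative integers satisfies lim_{k→∞} (k − τ_k) = +∞. If q + p < 1, then V_k converges to 0 as k → ∞. -/
/-- Lemma 2: asymptotic convergence of non-negative sequences satisfying a delayed
recurrence where the (possibly unbounded) delays satisfy `k − τ_k → ∞`.
Truncated natural subtraction `k - τk k` realizes `(k − τ_k)_+`. -/
theorem sequence_unbounded_delay_convergence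
    (V : ℕ → ℝ) (q p : ℝ) (τk : ℕ → ℕ)
    (hV : ∀ k, 0 ≤ V k) (hq : 0 ≤ q) (hp : 0 ≤ p)
    (hrec : ∀ k, V (k + 1) ≤ q * V k +
      p * (Finset.Icc (k - τk k) k).sup'
            (Finset.nonempty_Icc.mpr (Nat.sub_le k (τk k))) V)
    (hτ : Filter.Tendsto (fun k => k - τk k) Filter.atTop Filter.atTop)
    (hqp : q + p < 1) :
    Filter.Tendsto V Filter.atTop (nhds 0) := by
  have step : ∀ k M, (∀ l, k - τk k ≤ l → l ≤ k → V l ≤ M) → V (k + 1) ≤ (q + p) * M := by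
    intro k M h
    have h1 : (Finset.Icc (k - τk k) k).sup'
            (Finset.nonempty_Icc.mpr (Nat.sub_le k (τk k))) V ≤ M := by
      apply Finset.sup'_le
      intro l hl
      rw [Finset.mem_Icc] at hl
      exact h l hl.1 hl.2
    have h2 := h k (Nat.sub_le _ _) le_rfl
    have h3 := mul_le_mul_of_nonneg_left h1 hp
    have h4 := mul_le_mul_of_nonneg_left h2 hq
    linarith [hrec k]
  have hb : ∀ k, V k ≤ V 0 := by
    intro k
    induction k using Nat.strong_induction_on with
    | _ k ih =>
      rcases k with _ | k
      · exact le_rfl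
      · have h := step k (V 0) (fun l _ hl => ih l (by omega))
        have h0 := hV 0
        nlinarith
  have hn : ∀ n : ℕ, ∃ K, ∀ k, K ≤ k → V k ≤ (q + p) ^ n * V 0 := by
    intro n
    induction n with
    | zero => exact ⟨0, fun k _ => by simpa using hb k⟩
    | succ n ih =>
      obtain ⟨K, hK⟩ := ih
      obtain ⟨N, hN⟩ := Filter.eventually_atTop.mp (hτ.eventually_ge_atTop K)
      refine ⟨N + 1, fun k hk => ?_⟩
      obtain ⟨j, rfl⟩ : ∃ j, k = j + 1 := ⟨k - 1, by omega⟩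
      have h := step j _ (fun l hl _ => hK l (le_trans (hN j (by omega)) hl))
      calc V (j + 1) ≤ _ := h
        _ = _ := by ring
  have hlim : Filter.Tendsto (fun n : ℕ => (q + p) ^ n * V 0) Filter.atTop (nhds 0) := by
    simpa using (tendsto_pow_atTop_nhds_zero_of_lt_one (by linarith) hqp).mul_const (V 0)
  rw [Metric.tendsto_atTop]
  intro ε hε
  obtain ⟨n, hn'⟩ := (hlim.eventually_lt_const hε).exists
  obtain ⟨K, hK⟩ := hn n
  refine ⟨K, fun k hk => ?_⟩
  rw [Real.dist_eq, sub_zero, abs_of_nonneg (hV k)]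
  exact lt_of_le_of_lt (hK k hk) hn'
end

section
/- Let {V_k}_{k≥0} be a sequence of non-negative real numbers satisfying V_{k+1} ≤ q·V_k + p·max_{(k−τ_k)_+ ≤ ℓ ≤ k} V_ℓ for all k ≥ 0, with non-negative constants q, p such that q + p < 1, and non-negative integer delays τ_k. Suppose there exists a function Λ : ℝ → ℝ such that (i) Λ(0) = 1, (ii) Λ is non-increasing, and (iii) lim_{k→∞} Λ(k) = 0 and (q + p)·Λ(k − τ_k) ≤ Λ(k+1) for all k ≥ 0. Then V_k ≤ Λ(k)·V_0 for all k ≥ 0. -/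
/-- Lemma 3: rate estimates for delayed recurrences via a comparison function `Λ`.
Truncated natural subtraction `k - τk k` realizes `(k − τ_k)_+` in the recurrence,
while in condition (iii) the argument `k − τ_k` of `Λ : ℝ → ℝ` is taken in `ℝ`. -/
theorem sequence_delay_rate_via_comparison_function
    (V : ℕ → ℝ) (q p : ℝ) (τk : ℕ → ℕ)
    (hV : ∀ k, 0 ≤ V k) (hq : 0 ≤ q) (hp : 0 ≤ p)
    (hrec : ∀ k, V (k + 1) ≤ q * V k +
      p * (Finset.Icc (k - τk k) k).sup'
            (Finset.nonempty_Icc.mpr (Nat.sub_le k (τk k))) V)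
    (hqp : q + p < 1)
    (Λ : ℝ → ℝ)
    (hΛ0 : Λ 0 = 1)
    (hΛmono : ∀ s t : ℝ, s ≤ t → Λ t ≤ Λ s)
    (hΛlim : Filter.Tendsto (fun k : ℕ => Λ k) Filter.atTop (nhds 0))
    (hΛrec : ∀ k : ℕ, (q + p) * Λ ((k : ℝ) - (τk k : ℝ)) ≤ Λ ((k : ℝ) + 1)) :
    ∀ k : ℕ, V k ≤ Λ k * V 0 := by
  intro k
  induction k using Nat.strong_induction_on with
  | _ n ih =>
    cases n with
    | zero => simp [hΛ0]
    | succ k =>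
      have key : ∀ l, k - τk k ≤ l → l ≤ k → V l ≤ Λ ((k : ℝ) - (τk k : ℝ)) * V 0 := by
        intro l h1 h2
        refine (ih l (by omega)).trans (mul_le_mul_of_nonneg_right (hΛmono _ _ ?_) (hV 0))
        have h3 : k ≤ l + τk k := by omega
        have h4 : (k : ℝ) ≤ (l : ℝ) + (τk k : ℝ) := by exact_mod_cast h3
        linarith
      have hs : (Finset.Icc (k - τk k) k).sup'
            (Finset.nonempty_Icc.mpr (Nat.sub_le k (τk k))) V
            ≤ Λ ((k : ℝ) - (τk k : ℝ)) * V 0 := by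
        apply Finset.sup'_le
        intro l hl
        rw [Finset.mem_Icc] at hl
        exact key l hl.1 hl.2
      have h1 := mul_le_mul_of_nonneg_left (key k (Nat.sub_le _ _) le_rfl) hq
      have h2 := mul_le_mul_of_nonneg_left hs hp
      have h3 := mul_le_mul_of_nonneg_right (hΛrec k) (hV 0)
      have h4 := hrec k
      push_cast
      linarith
end

section
/- Let {V_k}_{k≥0} be a sequence of non-negative real numbers satisfying V_{k+1} ≤ q·V_k + p·max_{(k−τ_k)_+ ≤ ℓ ≤ k} V_ℓ for all k ≥ 0, where q and p are non-negative constants with q + p < 1. Suppose the non-negative integer delays satisfy τ_k ≤ α·k + β for all k ≥ 0, where α ∈ (0,1) and β ≥ 0. Then V_k ≤ (α·k/(1 − α + β) + 1)^{−η} · V_0 for all k ≥ 0, where η = ln(q+p)/ln(1−α). -/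
/-- Corollary 1: polynomial convergence rate for delayed recurrences with delays
growing at most linearly, `τ_k ≤ α k + β` with `α ∈ (0,1)`, `β ≥ 0`.
Truncated natural subtraction `k - τk k` realizes `(k − τ_k)_+`, and
`x ^ (-η)` is the real power `Real.rpow` with `η = ln(q+p)/ln(1−α)`. -/
theorem sequence_linearly_growing_delay_polynomial_rate
    (V : ℕ → ℝ) (q p : ℝ) (τk : ℕ → ℕ) (α β : ℝ)
    (hV : ∀ k, 0 ≤ V k) (hq : 0 ≤ q) (hp : 0 ≤ p)
    (hα0 : 0 < α) (hα1 : α < 1) (hβ : 0 ≤ β)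
    (hτ : ∀ k : ℕ, (τk k : ℝ) ≤ α * k + β)
    (hrec : ∀ k, V (k + 1) ≤ q * V k +
      p * (Finset.Icc (k - τk k) k).sup'
            (Finset.nonempty_Icc.mpr (Nat.sub_le k (τk k))) V)
    (hqp : q + p < 1) :
    ∀ k : ℕ, V k ≤
      (α * k / (1 - α + β) + 1) ^ (-(Real.log (q + p) / Real.log (1 - α))) * V 0 := by
  have h1a : 0 < 1 - α := by linarith
  have hD : 0 < 1 - α + β := by linarith
  have hc0 : 0 ≤ q + p := by linarith
  have hlog : Real.log (1 - α) < 0 := Real.log_neg h1a (by linarith)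
  obtain ⟨η, hη⟩ : ∃ η, η = Real.log (q + p) / Real.log (1 - α) := ⟨_, rfl⟩
  rw [← hη]
  have hη0 : 0 ≤ η := by
    rw [hη]
    exact div_nonneg_of_nonpos (Real.log_nonpos hc0 hqp.le) hlog.le
  have hcη : q + p ≤ (1 - α) ^ η := by
    rcases hc0.eq_or_lt with h | h
    · rw [← h]
      positivity
    · rw [Real.rpow_def_of_pos h1a, hη, mul_div_cancel₀ _ hlog.ne, Real.exp_log h]
  have hpos : ∀ n : ℕ, 0 < α * n / (1 - α + β) + 1 := fun n => by positivity
  have hanti : ∀ m n : ℕ, m ≤ n →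
      (α * n / (1 - α + β) + 1) ^ (-η) ≤ (α * m / (1 - α + β) + 1) ^ (-η) := by
    intro m n hmn
    apply Real.rpow_le_rpow_of_nonpos (hpos m) _ (by linarith)
    have : (m : ℝ) ≤ n := by exact_mod_cast hmn
    gcongr
  intro k
  induction k using Nat.strong_induction_on with
  | _ k ih =>
  rcases k with _ | k
  · simp
  obtain ⟨m, hm⟩ : ∃ m, m = k - τk k := ⟨_, rfl⟩
  have hmk : m ≤ k := by omega
  have hV0 := hV 0
  have hb : ∀ l, m ≤ l → l ≤ k → V l ≤ (α * m / (1 - α + β) + 1) ^ (-η) * V 0 := by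
    intro l h1 h2
    exact (ih l (by omega)).trans (mul_le_mul_of_nonneg_right (hanti m l h1) hV0)
  have hsup : (Finset.Icc (k - τk k) k).sup'
            (Finset.nonempty_Icc.mpr (Nat.sub_le k (τk k))) V
      ≤ (α * m / (1 - α + β) + 1) ^ (-η) * V 0 := by
    apply Finset.sup'_le
    intro l hl
    rw [Finset.mem_Icc] at hl
    exact hb l (by omega) hl.2
  have hstep : V (k + 1) ≤ (q + p) * ((α * m / (1 - α + β) + 1) ^ (-η) * V 0) := by
    have e1 := mul_le_mul_of_nonneg_left (hb k hmk le_rfl) hq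
    have e2 := mul_le_mul_of_nonneg_left hsup hp
    linarith [hrec k]
  have hmr : (1 - α) * k - β ≤ (m : ℝ) := by
    have h1 : (k : ℝ) ≤ m + τk k := by
      have : k ≤ m + τk k := by omega
      exact_mod_cast this
    linarith [hτ k]
  have hAB : (1 - α) * (α * ((k + 1 : ℕ) : ℝ) / (1 - α + β) + 1)
      ≤ α * m / (1 - α + β) + 1 := by
    have h2 : α * m / (1 - α + β) + 1
        - (1 - α) * (α * ((k + 1 : ℕ) : ℝ) / (1 - α + β) + 1)
        = α * (m - ((1 - α) * k - β)) / (1 - α + β) := by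
      push_cast
      field_simp
      ring
    have h3 : 0 ≤ α * (m - ((1 - α) * k - β)) / (1 - α + β) :=
      div_nonneg (mul_nonneg hα0.le (by linarith)) hD.le
    linarith
  have hB := hpos (k + 1)
  have h4 := Real.rpow_le_rpow_of_nonpos (mul_pos h1a hB) hAB (by linarith : -η ≤ 0)
  rw [Real.mul_rpow h1a.le hB.le] at h4
  have h5 : (q + p) * (α * m / (1 - α + β) + 1) ^ (-η)
      ≤ (α * ((k + 1 : ℕ) : ℝ) / (1 - α + β) + 1) ^ (-η) := by
    have hA : 0 ≤ (α * m / (1 - α + β) + 1) ^ (-η) := Real.rpow_nonneg (hpos m).le _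
    calc _ ≤ (1 - α) ^ η * (α * m / (1 - α + β) + 1) ^ (-η) :=
          mul_le_mul_of_nonneg_right hcη hA
      _ ≤ (1 - α) ^ η * ((1 - α) ^ (-η) *
            (α * ((k + 1 : ℕ) : ℝ) / (1 - α + β) + 1) ^ (-η)) :=
          mul_le_mul_of_nonneg_left h4 (Real.rpow_nonneg h1a.le _)
      _ = _ := by
          rw [← mul_assoc, ← Real.rpow_add h1a]
          simp
  calc V (k + 1) ≤ _ := hstep
    _ = ((q + p) * (α * m / (1 - α + β) + 1) ^ (-η)) * V 0 := by ring
    _ ≤ _ := mul_le_mul_of_nonneg_right h5 hV0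
end

section
/- Let f : ℝ^d → ℝ be L-smooth and μ-strongly convex with minimizer x⋆, let τ be a non-negative integer, and let the delayed gradient iterates be x_{k+1} = x_k − γ·∇f(x_{k−τ}) for k ≥ 0 (with the convention x_j = x_0 for j < 0), where γ ∈ (0, 2/(μ+L)]. Define ω_k = 2γ·⟨∇f(x_k) − ∇f(x_{k−τ}), x_k − γ∇f(x_k) − x⋆⟩ + γ²·‖∇f(x_k) − ∇f(x_{k−τ})‖². Then for every k ≥ 0, ω_k ≤ (γ⁴L⁴τ² + 2γ²L²τ) · max_{(k−2τ)_+ ≤ ℓ ≤ k} ‖x_ℓ − x⋆‖². -/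
open scoped RealInnerProductSpace

theorem aux_descent {d : ℕ} (f : EuclideanSpace ℝ (Fin d) → ℝ) (L : ℝ)
    (hdiff : Differentiable ℝ f)
    (hsmooth : ∀ a b : EuclideanSpace ℝ (Fin d),
      ‖gradient f b - gradient f a‖ ≤ L * ‖b - a‖)
    (a v : EuclideanSpace ℝ (Fin d)) :
    f (a + v) ≤ f a + ⟪gradient f a, v⟫ + L / 2 * ‖v‖ ^ 2 := by
  have hd : ∀ t : ℝ, HasDerivAt
      (fun t : ℝ => f (a + t • v) - t * ⟪gradient f a, v⟫ - L / 2 * ‖v‖ ^ 2 * t ^ 2)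
      (⟪gradient f (a + t • v), v⟫ - ⟪gradient f a, v⟫ - L * ‖v‖ ^ 2 * t) t := by
    intro t
    have h1 : HasDerivAt (fun t : ℝ => a + t • v) v t := by
      simpa using ((hasDerivAt_id t).smul_const v).const_add a
    have h2 : HasDerivAt (fun t : ℝ => f (a + t • v)) ⟪gradient f (a + t • v), v⟫ t := by
      have h := (hdiff (a + t • v)).hasGradientAt.hasFDerivAt.comp_hasDerivAt t h1
      rw [InnerProductSpace.toDual_apply_apply] at h
      exact h
    have h3 := (hasDerivAt_id t).mul_const ⟪gradient f a, v⟫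
    have h4 := ((hasDerivAt_id t).pow 2).const_mul (L / 2 * ‖v‖ ^ 2)
    refine ((h2.sub h3).sub h4).congr_deriv ?_
    simp
    ring
  have hanti : AntitoneOn
      (fun t : ℝ => f (a + t • v) - t * ⟪gradient f a, v⟫ - L / 2 * ‖v‖ ^ 2 * t ^ 2)
      (Set.Icc 0 1) := by
    apply antitoneOn_of_deriv_nonpos (convex_Icc 0 1)
    · exact fun t _ => (hd t).continuousAt.continuousWithinAt
    · exact fun t _ => (hd t).differentiableAt.differentiableWithinAt
    · intro t ht
      rw [interior_Icc] at ht
      rw [(hd t).deriv, ← inner_sub_left]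
      have h1 := real_inner_le_norm (gradient f (a + t • v) - gradient f a) v
      have h2 := hsmooth a (a + t • v)
      rw [add_sub_cancel_left, norm_smul, Real.norm_of_nonneg ht.1.le] at h2
      have h3 := mul_le_mul_of_nonneg_right h2 (norm_nonneg v)
      nlinarith
  have := hanti (Set.left_mem_Icc.2 zero_le_one) (Set.right_mem_Icc.2 zero_le_one) zero_le_one
  simp only [one_smul, zero_smul, add_zero] at this
  linarith

theorem aux_coco {d : ℕ} (f : EuclideanSpace ℝ (Fin d) → ℝ) (L μ : ℝ)
    (hL : 0 < L) (hμ : 0 < μ)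
    (hdiff : Differentiable ℝ f)
    (hsmooth : ∀ a b : EuclideanSpace ℝ (Fin d),
      ‖gradient f b - gradient f a‖ ≤ L * ‖b - a‖)
    (hsc : ∀ a b : EuclideanSpace ℝ (Fin d),
      f a + ⟪gradient f a, b - a⟫ + μ / 2 * ‖b - a‖ ^ 2 ≤ f b)
    (xs : EuclideanSpace ℝ (Fin d)) (h0 : gradient f xs = 0)
    (hmin : ∀ y, f xs ≤ f y) (a : EuclideanSpace ℝ (Fin d)) :
    ‖gradient f a‖ ^ 2 ≤ L * ⟪gradient f a, a - xs⟫ := by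
  set g := gradient f a with hg
  have h1 := (hmin _).trans (aux_descent f L hdiff hsmooth a ((-L⁻¹) • g))
  have h2 := aux_descent f L hdiff hsmooth xs (L⁻¹ • g)
  have h3 := hsc a (xs + L⁻¹ • g)
  have h4 : 0 ≤ μ / 2 * ‖xs + L⁻¹ • g - a‖ ^ 2 := by positivity
  have e : ⟪g, xs + L⁻¹ • g - a⟫ = L⁻¹ * ‖g‖ ^ 2 - ⟪g, a - xs⟫ := by
    rw [show xs + L⁻¹ • g - a = L⁻¹ • g - (a - xs) by abel, inner_sub_right,
      real_inner_smul_right, real_inner_self_eq_norm_sq]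
  rw [← hg, e] at h3
  rw [h0, inner_zero_left, norm_smul, Real.norm_of_nonneg (inv_pos.2 hL).le] at h2
  rw [← hg, real_inner_smul_right, real_inner_self_eq_norm_sq, norm_smul, norm_neg,
    Real.norm_of_nonneg (inv_pos.2 hL).le] at h1
  have e2 : L / 2 * (L⁻¹ * ‖g‖) ^ 2 = L⁻¹ * ‖g‖ ^ 2 / 2 := by field_simp
  rw [e2] at h1 h2
  have : L⁻¹ * ‖g‖ ^ 2 ≤ ⟪g, a - xs⟫ := by linarith
  rwa [inv_mul_le_iff₀ hL] at this

/-- Lemma A.1 (Lemma `delayedgradient_1`): bound on the asynchrony-induced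
perturbation term for gradient descent with constant gradient delay `τ`.
The convention `x_j = x_0` for `j < 0` is realized by truncated natural
subtraction `k - τ`, and `(k − 2τ)_+` by `k - 2 * τ` in `ℕ`. -/
theorem delayed_gradient_perturbation_bound
    {d : ℕ} (f : EuclideanSpace ℝ (Fin d) → ℝ) (L μ γ : ℝ) (τ : ℕ)
    (hL : 0 < L) (hμ : 0 < μ)
    (hdiff : Differentiable ℝ f)
    (hsmooth : ∀ a b : EuclideanSpace ℝ (Fin d),
      ‖gradient f b - gradient f a‖ ≤ L * ‖b - a‖)
    (hsc : ∀ a b : EuclideanSpace ℝ (Fin d),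
      f a + ⟪gradient f a, b - a⟫ + μ / 2 * ‖b - a‖ ^ 2 ≤ f b)
    (xstar : EuclideanSpace ℝ (Fin d))
    (hmin : ∀ y, f xstar ≤ f y)
    (hγ0 : 0 < γ) (hγ : γ ≤ 2 / (μ + L))
    (x : ℕ → EuclideanSpace ℝ (Fin d))
    (hx : ∀ k : ℕ, x (k + 1) = x k - γ • gradient f (x (k - τ)))
    (ω : ℕ → ℝ)
    (hω : ∀ k : ℕ, ω k =
      2 * γ * ⟪gradient f (x k) - gradient f (x (k - τ)),
               x k - γ • gradient f (x k) - xstar⟫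
      + γ ^ 2 * ‖gradient f (x k) - gradient f (x (k - τ))‖ ^ 2) :
    ∀ k : ℕ, ω k ≤ (γ ^ 4 * L ^ 4 * (τ : ℝ) ^ 2 + 2 * γ ^ 2 * L ^ 2 * (τ : ℝ)) *
      (Finset.Icc (k - 2 * τ) k).sup'
        (Finset.nonempty_Icc.mpr (Nat.sub_le k (2 * τ)))
        (fun ℓ => ‖x ℓ - xstar‖ ^ 2) := by
  intro k
  have h0 : gradient f xstar = 0 := by
    have : IsLocalMin f xstar := Filter.Eventually.of_forall hmin
    simp [gradient, this.fderiv_eq_zero]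
  set S := (Finset.Icc (k - 2 * τ) k).sup'
        (Finset.nonempty_Icc.mpr (Nat.sub_le k (2 * τ)))
        (fun ℓ => ‖x ℓ - xstar‖ ^ 2) with hS
  have hle : ∀ l, k - 2 * τ ≤ l → l ≤ k → ‖x l - xstar‖ ^ 2 ≤ S := fun l h1 h2 =>
    Finset.le_sup' (fun ℓ => ‖x ℓ - xstar‖ ^ 2) (Finset.mem_Icc.2 ⟨h1, h2⟩)
  have hS0 : 0 ≤ S := (sq_nonneg _).trans (hle k (Nat.sub_le _ _) le_rfl)
  set M := Real.sqrt S with hM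
  have hM0 : 0 ≤ M := Real.sqrt_nonneg _
  have hMS : M ^ 2 = S := Real.sq_sqrt hS0
  have hle' : ∀ l, k - 2 * τ ≤ l → l ≤ k → ‖x l - xstar‖ ≤ M := fun l h1 h2 =>
    Real.le_sqrt_of_sq_le (hle l h1 h2)
  have hgr : ∀ l, k - 2 * τ ≤ l → l ≤ k → ‖gradient f (x l)‖ ≤ L * M := by
    intro l h1 h2
    have h := hsmooth xstar (x l)
    rw [h0, sub_zero] at h
    exact h.trans (mul_le_mul_of_nonneg_left (hle' l h1 h2) hL.le)
  have hstep : ∀ n, k - τ + n ≤ k → ‖x (k - τ + n) - x (k - τ)‖ ≤ n * (γ * (L * M)) := by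
    intro n
    induction n with
    | zero => intro _; simp
    | succ n ih =>
      intro hn
      have h1 := ih (by omega)
      have h2 := hgr (k - τ + n - τ) (by omega) (by omega)
      rw [← add_assoc, hx]
      have h3 : ‖γ • gradient f (x (k - τ + n - τ))‖ ≤ γ * (L * M) := by
        rw [norm_smul, Real.norm_of_nonneg hγ0.le]
        exact mul_le_mul_of_nonneg_left h2 hγ0.le
      rw [sub_right_comm]
      refine (norm_sub_le _ _).trans ?_
      push_cast
      linarith
  have hdist : ‖x k - x (k - τ)‖ ≤ τ * (γ * (L * M)) := by
    have h1 := hstep (k - (k - τ)) (by omega)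
    rw [show k - τ + (k - (k - τ)) = k by omega] at h1
    refine h1.trans (mul_le_mul_of_nonneg_right ?_ (by positivity))
    exact_mod_cast (by omega : k - (k - τ) ≤ τ)
  have hG : ‖gradient f (x k) - gradient f (x (k - τ))‖ ≤ L * (τ * (γ * (L * M))) :=
    (hsmooth _ _).trans (mul_le_mul_of_nonneg_left hdist hL.le)
  have hcon : ‖x k - γ • gradient f (x k) - xstar‖ ≤ M := by
    refine le_trans ?_ (hle' k (Nat.sub_le _ _) le_rfl)
    refine (sq_le_sq₀ (norm_nonneg _) (norm_nonneg _)).1 ?_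
    have hc := aux_coco f L μ hL hμ hdiff hsmooth hsc xstar h0 hmin (x k)
    rw [sub_right_comm, norm_sub_sq_real, real_inner_smul_right, real_inner_comm,
      norm_smul, Real.norm_of_nonneg hγ0.le]
    have hγL : γ * L ≤ 2 := by
      rw [le_div_iff₀ (by positivity)] at hγ
      nlinarith
    have hi : 0 ≤ ⟪gradient f (x k), x k - xstar⟫ := by
      by_contra hneg
      push Not at hneg
      nlinarith [sq_nonneg ‖gradient f (x k)‖]
    have h5 := mul_le_mul_of_nonneg_left hc hγ0.le
    have h6 := mul_le_mul_of_nonneg_right hγL hi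
    have h7 : γ * ‖gradient f (x k)‖ ^ 2 ≤ 2 * ⟪gradient f (x k), x k - xstar⟫ := by linarith
    have h8 := mul_le_mul_of_nonneg_left h7 hγ0.le
    linarith
  rw [hω]
  have hin : ⟪gradient f (x k) - gradient f (x (k - τ)), x k - γ • gradient f (x k) - xstar⟫
      ≤ L * (τ * (γ * (L * M))) * M :=
    (real_inner_le_norm _ _).trans (mul_le_mul hG hcon (norm_nonneg _) (by positivity))
  have hsq := pow_le_pow_left₀ (norm_nonneg _) hG 2
  calc _ ≤ 2 * γ * (L * (τ * (γ * (L * M))) * M) + γ ^ 2 * (L * (τ * (γ * (L * M)))) ^ 2 := by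
        gcongr
    _ = (γ ^ 4 * L ^ 4 * (τ : ℝ) ^ 2 + 2 * γ ^ 2 * L ^ 2 * (τ : ℝ)) * M ^ 2 := by ring
    _ = _ := by rw [hMS]
end

section
/- Consider the PIAG setting, and let {x_k} be the PIAG iterates with maximum delay τ and step-size γ ∈ (0, 1/(L·(2τ+1))]. Then for every k ≥ 1 and any x⋆ ∈ X⋆: P(x_k) − P⋆ ≤ ( (1/(2γ))·‖x_0 − x⋆‖² + τ·(P(x_0) − P⋆) ) / (k + τ). -/
abbrev PE (d : ℕ) := EuclideanSpace ℝ (Fin d)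

lemma line_deriv {d : ℕ} (f : PE d → ℝ) (hf : Differentiable ℝ f) (a v : PE d) (t : ℝ) :
    HasDerivAt (fun t : ℝ => f (a + t • v)) (inner ℝ (gradient f (a + t • v)) v) t := by
  have h1 : HasDerivAt (fun t : ℝ => a + t • v) v t := by
    simpa using ((hasDerivAt_id t).smul_const v).const_add a
  have h2 := (hf (a + t • v)).hasGradientAt.hasFDerivAt
  have := h2.comp_hasDerivAt t h1
  exact this.congr_deriv (by simp)

lemma grad_ineq {d : ℕ} (f : PE d → ℝ) (hc : ConvexOn ℝ Set.univ f) (hf : Differentiable ℝ f)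
    (a b : PE d) : f a + inner ℝ (gradient f a) (b - a) ≤ f b := by
  have hd := line_deriv f hf a (b - a) 0
  have hc2 : ConvexOn ℝ Set.univ (fun t : ℝ => f (a + t • (b - a))) := by
    refine ⟨convex_univ, ?_⟩
    intro s _ t _ p q hp hq hpq
    have := hc.2 (Set.mem_univ (a + s • (b - a))) (Set.mem_univ (a + t • (b - a))) hp hq hpq
    have e : p • (a + s • (b - a)) + q • (a + t • (b - a))
        = a + (p • s + q • t) • (b - a) := by
      have : q = 1 - p := by linarith
      subst this
      simp only [smul_eq_mul]
      module
    rw [e] at this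
    exact this
  have h := hc2.le_slope_of_hasDerivAt (Set.mem_univ 0) (Set.mem_univ 1) one_pos hd
  simp [slope] at h
  simp
  linarith

lemma descent {d : ℕ} (f : PE d → ℝ) (hf : Differentiable ℝ f) (l : ℝ)
    (hl : ∀ a b : PE d, ‖gradient f b - gradient f a‖ ≤ l * ‖b - a‖)
    (a b : PE d) :
    f b ≤ f a + inner ℝ (gradient f a) (b - a) + l / 2 * ‖b - a‖ ^ 2 := by
  set v := b - a with hv
  let φ : ℝ → ℝ := fun t => f (a + t • v) - t * inner ℝ (gradient f a) v - l / 2 * ‖v‖ ^ 2 * t ^ 2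
  have hφ : ∀ t, HasDerivAt φ (inner ℝ (gradient f (a + t • v)) v
      - inner ℝ (gradient f a) v - l * ‖v‖ ^ 2 * t) t := by
    intro t
    have h1 := line_deriv f hf a v t
    have h2 := (hasDerivAt_id t).mul_const (inner ℝ (gradient f a) v)
    have h3 := ((hasDerivAt_id t).pow 2).const_mul (l / 2 * ‖v‖ ^ 2)
    refine ((h1.sub h2).sub h3).congr_deriv ?_
    simp
    ring
  have hanti : AntitoneOn φ (Set.Icc 0 1) := by
    apply antitoneOn_of_deriv_nonpos (convex_Icc 0 1)
    · exact fun t _ => (hφ t).continuousAt.continuousWithinAt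
    · exact fun t _ => (hφ t).differentiableAt.differentiableWithinAt
    · intro t ht
      rw [interior_Icc] at ht
      rw [(hφ t).deriv, ← inner_sub_left]
      have h1 := real_inner_le_norm (gradient f (a + t • v) - gradient f a) v
      have h2 := hl a (a + t • v)
      have e : ‖a + t • v - a‖ = t * ‖v‖ := by
        rw [add_sub_cancel_left, norm_smul, Real.norm_of_nonneg ht.1.le]
      rw [e] at h2
      have := mul_le_mul_of_nonneg_right h2 (norm_nonneg v)
      nlinarith
  have := hanti (Set.left_mem_Icc.2 zero_le_one) (Set.right_mem_Icc.2 zero_le_one) zero_le_one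
  simp [φ, hv] at this
  simp [hv]
  linarith

lemma prox_ineq {d : ℕ} (p z u : PE d) (γ rp ru : ℝ)
    (h : ∀ θ : ℝ, 0 < θ → θ ≤ 1 → (1/2) * ‖p - z‖ ^ 2 + γ * rp ≤
      (1/2) * ‖(θ • u + (1 - θ) • p) - z‖ ^ 2 + γ * (θ * ru + (1 - θ) * rp)) :
    γ * (rp - ru) ≤ inner ℝ (p - z) (u - p) := by
  have key : ∀ θ : ℝ, 0 < θ → θ ≤ 1 →
      γ * (rp - ru) ≤ inner ℝ (p - z) (u - p) + θ * (‖u - p‖ ^ 2 / 2) := by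
    intro θ h0 h1
    have := h θ h0 h1
    have e : (θ • u + (1 - θ) • p) - z = (p - z) + θ • (u - p) := by module
    rw [e, norm_add_sq_real, norm_smul, inner_smul_right, Real.norm_of_nonneg h0.le] at this
    have : θ * (γ * (rp - ru)) ≤ θ * (inner ℝ (p - z) (u - p) + θ * (‖u - p‖ ^ 2 / 2)) := by
      nlinarith
    exact le_of_mul_le_mul_left this h0
  have ht : Filter.Tendsto (fun θ : ℝ => inner ℝ (p - z) (u - p) + θ * (‖u - p‖ ^ 2 / 2))
      (nhdsWithin 0 (Set.Ioi 0)) (nhds (inner ℝ (p - z) (u - p) + 0 * (‖u - p‖ ^ 2 / 2))) := by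
    apply Filter.Tendsto.mono_left _ nhdsWithin_le_nhds
    apply Continuous.tendsto
    fun_prop
  rw [zero_mul, add_zero] at ht
  refine ge_of_tendsto ht ?_
  filter_upwards [Ioc_mem_nhdsGT (zero_lt_one (α := ℝ))] with θ hθ using key θ hθ.1 hθ.2

lemma norm_path {d : ℕ} (x : ℕ → PE d) (a b : ℕ) (hab : a ≤ b) :
    ‖x b - x a‖ ≤ ∑ j ∈ Finset.Ico a b, ‖x (j+1) - x j‖ := by
  rw [← Finset.sum_Ico_sub x hab]
  exact norm_sum_le _ _

lemma norm_path_sq {d : ℕ} (x : ℕ → PE d) (a b c m : ℕ) (hca : c ≤ a) (hab : a ≤ b)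
    (hm : b ≤ c + m) :
    ‖x b - x a‖ ^ 2 ≤ m * ∑ j ∈ Finset.Ico c b, ‖x (j+1) - x j‖ ^ 2 := by
  have h1 := norm_path x a b hab
  have h2 : ‖x b - x a‖ ^ 2 ≤ (∑ j ∈ Finset.Ico a b, ‖x (j+1) - x j‖) ^ 2 :=
    pow_le_pow_left₀ (norm_nonneg _) h1 2
  have h3 := sq_sum_le_card_mul_sum_sq (s := Finset.Ico a b) (f := fun j => ‖x (j+1) - x j‖)
  have h4 : ∑ j ∈ Finset.Ico a b, ‖x (j+1) - x j‖ ^ 2 ≤ ∑ j ∈ Finset.Ico c b, ‖x (j+1) - x j‖ ^ 2 :=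
    Finset.sum_le_sum_of_subset_of_nonneg (Finset.Ico_subset_Ico_left hca) (by intros; positivity)
  have h5 : ((Finset.Ico a b).card : ℝ) ≤ m := by
    rw [Nat.card_Ico]; exact_mod_cast (by omega)
  refine h2.trans (h3.trans ?_)
  exact mul_le_mul h5 h4 (by positivity) (by positivity)

lemma norm_path_mul {d : ℕ} (x : ℕ → PE d) (a b c m : ℕ) (hca : c ≤ a) (hab : a ≤ b)
    (hm : b ≤ c + m) (D : ℝ) (hD : 0 ≤ D) :
    ‖x b - x a‖ * D ≤ (1/2) * (m * D ^ 2 + ∑ j ∈ Finset.Ico c b, ‖x (j+1) - x j‖ ^ 2) := by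
  have h0 : ‖x b - x a‖ ≤ ∑ j ∈ Finset.Ico c b, ‖x (j+1) - x j‖ :=
    (norm_path x a b hab).trans
     (Finset.sum_le_sum_of_subset_of_nonneg (Finset.Ico_subset_Ico_left hca) (by intros; positivity))
  have h1 : ‖x b - x a‖ * D ≤ ∑ j ∈ Finset.Ico c b, (1/2) * (D ^ 2 + ‖x (j+1) - x j‖ ^ 2) := by
    refine (mul_le_mul_of_nonneg_right h0 hD).trans ?_
    rw [Finset.sum_mul]
    refine Finset.sum_le_sum fun j _ => ?_
    nlinarith [sq_nonneg (‖x (j+1) - x j‖ - D)]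
  rw [← Finset.mul_sum, Finset.sum_add_distrib, Finset.sum_const, nsmul_eq_mul] at h1
  have h5 : ((Finset.Ico c b).card : ℝ) ≤ m := by
    rw [Nat.card_Ico]; exact_mod_cast (by omega)
  have := mul_le_mul_of_nonneg_right h5 (sq_nonneg D)
  linarith

lemma sum_swap (Δ : ℕ → ℝ) (hΔ : ∀ j, 0 ≤ Δ j) (τ K : ℕ) (L : ℝ) (hL : 0 < L) :
    ∑ k ∈ Finset.range K, (L / 2 * (k + τ) + L * (τ + 1) / 2) * ∑ j ∈ Finset.Ico (k - τ) k, Δ j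
      ≤ ∑ j ∈ Finset.range K, τ * (L / 2 * (j + 3 * τ + 1)) * Δ j := by
  simp_rw [Finset.mul_sum]
  rw [Finset.sum_comm' (t' := Finset.range K)
    (s' := fun j => (Finset.range K).filter (fun k => j < k ∧ k ≤ j + τ))
    (by intro a b; simp; omega)]
  refine Finset.sum_le_sum fun j _ => ?_
  rw [← Finset.sum_mul]
  refine mul_le_mul_of_nonneg_right ?_ (hΔ j)
  have hc : ((Finset.range K).filter (fun k => j < k ∧ k ≤ j + τ)).card ≤ τ := by
    have : (Finset.range K).filter (fun k => j < k ∧ k ≤ j + τ) ⊆ Finset.Ioc j (j + τ) := by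
      intro k; simp
    simpa using Finset.card_le_card this
  have h := Finset.sum_le_card_nsmul ((Finset.range K).filter (fun k => j < k ∧ k ≤ j + τ))
    (fun k : ℕ => (L / 2 * ((k:ℝ) + τ) + L * (τ + 1) / 2)) (L / 2 * (j + 3 * τ + 1)) (by
      intro k hk
      simp at hk
      have : (k : ℝ) ≤ j + τ := by exact_mod_cast hk.2.2
      nlinarith)
  refine h.trans ?_
  rw [nsmul_eq_mul]
  refine mul_le_mul_of_nonneg_right (by exact_mod_cast hc) (by positivity)

lemma lyapunov (Δ D a : ℕ → ℝ) (hΔ : ∀ j, 0 ≤ Δ j) (hD : ∀ j, 0 ≤ D j) (τ : ℕ) (L γ : ℝ)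
    (hL : 0 < L) (hγ : 0 < γ) (hγm : γ ≤ 1 / (L * (2 * (τ : ℝ) + 1)))
    (hstep : ∀ k : ℕ, ((k:ℝ) + 1 + τ) * a (k+1) ≤ (k + τ) * a k + 1 / (2 * γ) * (D k - D (k+1))
      + (k + τ) * (- (1 / γ) * Δ k + L / 2 * (τ + 1) * Δ k
          + L / 2 * ∑ j ∈ Finset.Ico (k - τ) k, Δ j)
      - 1 / (2 * γ) * Δ k + L * (τ + 1) / 2 * (∑ j ∈ Finset.Ico (k - τ) k, Δ j + Δ k)) (K : ℕ) :
    ((K:ℝ) + τ) * a K ≤ τ * a 0 + 1 / (2 * γ) * D 0 := by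
  have hind : ∀ K : ℕ, ((K:ℝ) + τ) * a K ≤ τ * a 0 + 1 / (2 * γ) * (D 0 - D K)
      + ∑ k ∈ Finset.range K, (L / 2 * (k + τ) + L * (τ + 1) / 2) * ∑ j ∈ Finset.Ico (k - τ) k, Δ j
      + ∑ k ∈ Finset.range K, ((k + τ) * (- (1 / γ) + L / 2 * (τ + 1)) - 1 / (2 * γ)
          + L * (τ + 1) / 2) * Δ k := by
    intro K
    induction K with
    | zero => simp
    | succ k ih =>
      rw [Finset.sum_range_succ, Finset.sum_range_succ]
      have := hstep k
      push_cast
      linarith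
  have h1 := hind K
  have h2 := sum_swap Δ hΔ τ K L hL
  have hc : L * (2 * τ + 1) ≤ 1 / γ := by
    rw [le_div_iff₀ hγ]
    rw [le_div_iff₀ (by positivity)] at hγm
    linarith
  have h3 : ∑ j ∈ Finset.range K, τ * (L / 2 * (j + 3 * τ + 1)) * Δ j
     + ∑ k ∈ Finset.range K, ((k + τ) * (- (1 / γ) + L / 2 * (τ + 1)) - 1 / (2 * γ)
          + L * (τ + 1) / 2) * Δ k ≤ 0 := by
    rw [← Finset.sum_add_distrib]
    refine Finset.sum_nonpos fun j _ => ?_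
    rw [← add_mul]
    refine mul_nonpos_of_nonpos_of_nonneg ?_ (hΔ j)
    have e : 1 / (2 * γ) = (1 / γ) / 2 := by field_simp
    rw [e]
    have hj : (0:ℝ) ≤ j := j.cast_nonneg
    have ht : (0:ℝ) ≤ τ := τ.cast_nonneg
    have h5 := mul_le_mul_of_nonneg_left hc (by positivity : (0:ℝ) ≤ (j:ℝ) + τ + 1/2)
    have h6 : 0 ≤ L * (2 * j * τ + j + τ) := by positivity
    nlinarith
  have h4 : 0 ≤ 1 / (2 * γ) * D K := mul_nonneg (by positivity) (hD K)
  linarith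

lemma avg_ineq {d n : ℕ} (f : Fin n → PE d → ℝ) (Li : Fin n → ℝ) (G : Fin n → PE d)
    (p u : PE d) (c : ℝ)
    (h : ∀ i, f i p ≤ f i u + inner ℝ (G i) (p - u) + Li i * c) :
    (1 / (n:ℝ)) * ∑ i, f i p ≤ (1 / (n:ℝ)) * ∑ i, f i u
      + inner ℝ ((1 / (n:ℝ)) • ∑ i, G i) (p - u) + ((1 / (n:ℝ)) * ∑ i, Li i) * c := by
  have := Finset.sum_le_sum (s := Finset.univ) fun i _ => h i
  have h2 := mul_le_mul_of_nonneg_left this (by positivity : (0:ℝ) ≤ 1 / (n:ℝ))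
  rw [Finset.sum_add_distrib, Finset.sum_add_distrib, ← Finset.sum_mul, ← sum_inner] at h2
  rw [real_inner_smul_left]
  linarith

lemma step_star_i {d : ℕ} (f : PE d → ℝ) (hc : ConvexOn ℝ Set.univ f) (hf : Differentiable ℝ f)
    (l : ℝ) (hl0 : 0 ≤ l)
    (hl : ∀ a b : PE d, ‖gradient f b - gradient f a‖ ≤ l * ‖b - a‖)
    (x : ℕ → PE d) (u : PE d) (k s τ : ℕ) (hs1 : k - τ ≤ s) (hs2 : s ≤ k) :
    f (x (k+1)) ≤ f u + inner ℝ (gradient f (x s)) (x (k+1) - u)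
      + l * ((τ + 1) / 2 * (∑ j ∈ Finset.Ico (k - τ) k, ‖x (j+1) - x j‖ ^ 2
          + ‖x (k+1) - x k‖ ^ 2)) := by
  have h1 := descent f hf l hl (x s) (x (k+1))
  have h2 := grad_ineq f hc hf (x s) u
  have h3 := norm_path_sq x s (k+1) (k - τ) (τ + 1) hs1 (by omega) (by omega)
  rw [Finset.sum_Ico_succ_top (by omega)] at h3
  push_cast at h3
  have h4 := mul_le_mul_of_nonneg_left h3 hl0
  have e : x (k+1) - u = (x (k+1) - x s) - (u - x s) := by abel
  rw [e, inner_sub_right]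
  linarith

lemma step_desc_i {d : ℕ} (f : PE d → ℝ) (hf : Differentiable ℝ f)
    (l : ℝ) (hl0 : 0 ≤ l)
    (hl : ∀ a b : PE d, ‖gradient f b - gradient f a‖ ≤ l * ‖b - a‖)
    (x : ℕ → PE d) (k s τ : ℕ) (hs1 : k - τ ≤ s) (hs2 : s ≤ k) :
    f (x (k+1)) ≤ f (x k) + inner ℝ (gradient f (x s)) (x (k+1) - x k)
      + l * ((1 / 2) * ((τ + 1) * ‖x (k+1) - x k‖ ^ 2
          + ∑ j ∈ Finset.Ico (k - τ) k, ‖x (j+1) - x j‖ ^ 2)) := by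
  have h1 := descent f hf l hl (x k) (x (k+1))
  have h3 := norm_path_mul x s k (k - τ) τ hs1 hs2 (by omega) ‖x (k+1) - x k‖ (norm_nonneg _)
  have h4 := mul_le_mul_of_nonneg_left h3 hl0
  have h5 := real_inner_le_norm (gradient f (x k) - gradient f (x s)) (x (k+1) - x k)
  have h6 := mul_le_mul_of_nonneg_right (hl (x s) (x k)) (norm_nonneg (x (k+1) - x k))
  rw [inner_sub_left] at h5
  linarith

lemma piag_real {d n : ℕ}
    (f : Fin n → PE d → ℝ) (Li : Fin n → ℝ)
    (hconv : ∀ i, ConvexOn ℝ Set.univ (f i))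
    (hdiff : ∀ i, Differentiable ℝ (f i))
    (hLi0 : ∀ i, 0 ≤ Li i)
    (hLi : ∀ i, ∀ a b : PE d, ‖gradient (f i) b - gradient (f i) a‖ ≤ Li i * ‖b - a‖)
    (F : PE d → ℝ)
    (hF : ∀ z, F z = (1 / (n : ℝ)) * ∑ i, f i z)
    (L : ℝ) (hLdef : L = (1 / (n : ℝ)) * ∑ i, Li i)
    (γ : ℝ) (hγ : 0 < γ) (τ : ℕ)
    (s : Fin n → ℕ → ℕ)
    (hs1 : ∀ i k, k - τ ≤ s i k) (hs2 : ∀ i k, s i k ≤ k)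
    (x g : ℕ → PE d)
    (hg : ∀ k, g k = (1 / (n : ℝ)) • ∑ i, gradient (f i) (x (s i k)))
    (hL : 0 < L) (hγmax : γ ≤ 1 / (L * (2 * (τ : ℝ) + 1)))
    (xs : PE d) (r : PE d → ℝ)
    (hstar : ∀ k, γ * (r (x (k+1)) - r xs)
      ≤ inner ℝ (x (k+1) - (x k - γ • g k)) (xs - x (k+1)))
    (hdesc : ∀ k, (k ≠ 0 ∨ τ ≠ 0) → γ * (r (x (k+1)) - r (x k))
      ≤ inner ℝ (x (k+1) - (x k - γ • g k)) (x k - x (k+1))) (K : ℕ) :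
    ((K:ℝ) + τ) * (F (x K) + r (x K) - (F xs + r xs))
      ≤ τ * (F (x 0) + r (x 0) - (F xs + r xs)) + 1 / (2 * γ) * ‖x 0 - xs‖ ^ 2 := by
  refine lyapunov (fun j => ‖x (j+1) - x j‖ ^ 2) (fun j => ‖x j - xs‖ ^ 2)
    (fun k => F (x k) + r (x k) - (F xs + r xs)) (fun _ => by positivity) (fun _ => by positivity)
    τ L γ hL hγ hγmax ?_ K
  intro k
  have A := avg_ineq f Li (fun i => gradient (f i) (x (s i k))) (x (k+1)) xs _
    fun i => step_star_i (f i) (hconv i) (hdiff i) (Li i) (hLi0 i) (hLi i) x xs k (s i k) τ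
      (hs1 i k) (hs2 i k)
  rw [← hF, ← hF, ← hg, ← hLdef] at A
  have B := avg_ineq f Li (fun i => gradient (f i) (x (s i k))) (x (k+1)) (x k) _
    fun i => step_desc_i (f i) (hdiff i) (Li i) (hLi0 i) (hLi i) x k (s i k) τ
      (hs1 i k) (hs2 i k)
  rw [← hF, ← hF, ← hg, ← hLdef] at B
  set S := ∑ j ∈ Finset.Ico (k - τ) k, ‖x (j+1) - x j‖ ^ 2 with hS
  have A2 : r (x (k+1)) - r xs ≤ - inner ℝ (g k) (x (k+1) - xs)
      + 1 / (2 * γ) * (‖x k - xs‖ ^ 2 - ‖x (k+1) - xs‖ ^ 2 - ‖x (k+1) - x k‖ ^ 2) := by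
    have h := hstar k
    have e1 : x (k+1) - (x k - γ • g k) = (x (k+1) - x k) + γ • g k := by abel
    have e2 : xs - x (k+1) = - (x (k+1) - xs) := by abel
    rw [e1, e2, inner_neg_right, inner_add_left, real_inner_smul_left] at h
    have e3 : x k - xs = (x (k+1) - xs) - (x (k+1) - x k) := by abel
    have e4 := norm_sub_sq_real (x (k+1) - xs) (x (k+1) - x k)
    rw [← e3, real_inner_comm] at e4
    rw [e4]
    refine le_of_mul_le_mul_left (h.trans (le_of_eq ?_)) hγ
    field_simp
    ring
  have B2 : (k ≠ 0 ∨ τ ≠ 0) → r (x (k+1)) - r (x k) ≤ - inner ℝ (g k) (x (k+1) - x k)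
      - 1 / γ * ‖x (k+1) - x k‖ ^ 2 := by
    intro hk
    have h := hdesc k hk
    have e1 : x (k+1) - (x k - γ • g k) = (x (k+1) - x k) + γ • g k := by abel
    have e2 : x k - x (k+1) = - (x (k+1) - x k) := by abel
    rw [e1, e2, inner_neg_right, inner_add_left, real_inner_smul_left,
      real_inner_self_eq_norm_sq] at h
    refine le_of_mul_le_mul_left (h.trans (le_of_eq ?_)) hγ
    field_simp
    ring
  have C : ((k:ℝ) + τ) * (F (x (k+1)) + r (x (k+1)) - (F (x k) + r (x k))) ≤
      (k + τ) * (- (1 / γ) * ‖x (k+1) - x k‖ ^ 2 + L / 2 * (τ + 1) * ‖x (k+1) - x k‖ ^ 2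
          + L / 2 * S) := by
    by_cases hk : k ≠ 0 ∨ τ ≠ 0
    · have := B2 hk
      refine mul_le_mul_of_nonneg_left ?_ (by positivity)
      linarith
    · push Not at hk
      simp [hk.1, hk.2]
  linarith


/-- Theorem 1 (PIAG, convex case): with step-size `γ ∈ (0, 1/(L(2τ+1))]`, for
every `k ≥ 1` and any optimal `x⋆`,
`P(x_k) − P⋆ ≤ ((1/2γ)‖x_0 − x⋆‖² + τ (P(x_0) − P⋆)) / (k + τ)`.
The division by the positive real `k + τ` is rendered as multiplication by its
inverse in `EReal`; the regularizer `R` is `EReal`-valued. -/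
theorem piag_convex_rate
    {d n : ℕ} (hn : 0 < n)
    (f : Fin n → EuclideanSpace ℝ (Fin d) → ℝ)
    (Li : Fin n → ℝ)
    (hconv : ∀ i, ConvexOn ℝ Set.univ (f i))
    (hdiff : ∀ i, Differentiable ℝ (f i))
    (hLi : ∀ i, ∀ a b : EuclideanSpace ℝ (Fin d),
      ‖gradient (f i) b - gradient (f i) a‖ ≤ Li i * ‖b - a‖)
    (R : EuclideanSpace ℝ (Fin d) → EReal)
    (hRne_top : ∃ z, R z ≠ ⊤)
    (hRne_bot : ∀ z, R z ≠ ⊥)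
    (hRconvex : ∀ z w : EuclideanSpace ℝ (Fin d), ∀ θ : ℝ, 0 ≤ θ → θ ≤ 1 →
      R (θ • z + (1 - θ) • w) ≤ (θ : EReal) * R z + ((1 - θ : ℝ) : EReal) * R w)
    (hRclosed : LowerSemicontinuous R)
    (F : EuclideanSpace ℝ (Fin d) → ℝ)
    (hF : ∀ z, F z = (1 / (n : ℝ)) * ∑ i, f i z)
    (L : ℝ) (hLdef : L = (1 / (n : ℝ)) * ∑ i, Li i)
    (P : EuclideanSpace ℝ (Fin d) → EReal)
    (hP : ∀ z, P z = (F z : EReal) + R z)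
    (γ : ℝ) (hγ : 0 < γ) (τ : ℕ)
    (s : Fin n → ℕ → ℕ)
    (hs1 : ∀ i k, k - τ ≤ s i k) (hs2 : ∀ i k, s i k ≤ k)
    (x : ℕ → EuclideanSpace ℝ (Fin d))
    (g : ℕ → EuclideanSpace ℝ (Fin d))
    (hg : ∀ k, g k = (1 / (n : ℝ)) • ∑ i, gradient (f i) (x (s i k)))
    (hprox : ∀ k : ℕ, ∀ u : EuclideanSpace ℝ (Fin d),
      (((1 / 2) * ‖x (k + 1) - (x k - γ • g k)‖ ^ 2 : ℝ) : EReal)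
          + (γ : EReal) * R (x (k + 1))
        ≤ (((1 / 2) * ‖u - (x k - γ • g k)‖ ^ 2 : ℝ) : EReal) + (γ : EReal) * R u)
    (hL : 0 < L)
    (hγmax : γ ≤ 1 / (L * (2 * (τ : ℝ) + 1)))
    (xstar : EuclideanSpace ℝ (Fin d))
    (hxstar : ∀ y, P xstar ≤ P y) :
    ∀ k : ℕ, 1 ≤ k →
      P (x k) - P xstar
        ≤ ((1 / ((k : ℝ) + (τ : ℝ)) : ℝ) : EReal) *
            ((((1 / (2 * γ)) * ‖x 0 - xstar‖ ^ 2 : ℝ) : EReal)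
              + ((τ : ℝ) : EReal) * (P (x 0) - P xstar)) := by
  have hγ0 : (0:ℝ) ≤ γ := hγ.le
  -- finiteness
  have hPs : P xstar ≠ ⊤ := by
    obtain ⟨z, hz⟩ := hRne_top
    have h := hxstar z
    rw [hP z] at h
    intro h'
    rw [h', top_le_iff] at h
    exact EReal.add_ne_top (EReal.coe_ne_top _) hz h
  have hRs : R xstar ≠ ⊤ := by
    intro h
    apply hPs
    rw [hP, h, EReal.coe_add_top]
  have hcoe : ∀ z, R z ≠ ⊤ → R z = ((R z).toReal : EReal) := fun z hz =>
    (EReal.coe_toReal hz (hRne_bot z)).symm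
  have hPcoe : ∀ z, R z ≠ ⊤ → P z = ((F z + (R z).toReal : ℝ) : EReal) := fun z hz => by
    rw [hP, EReal.coe_add, ← hcoe z hz]
  have hRx : ∀ k, R (x (k+1)) ≠ ⊤ := by
    intro k h
    have h1 := hprox k xstar
    rw [h, EReal.coe_mul_top_of_pos hγ, EReal.coe_add_top, top_le_iff, hcoe xstar hRs,
      ← EReal.coe_mul, ← EReal.coe_add] at h1
    exact EReal.coe_ne_top _ h1
  have hpr : ∀ k u, R u ≠ ⊤ → γ * ((R (x (k+1))).toReal - (R u).toReal)
      ≤ inner ℝ (x (k+1) - (x k - γ • g k)) (u - x (k+1)) := by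
    intro k u hu
    apply prox_ineq
    intro θ h0 h1
    have h2 := hRconvex u (x (k+1)) θ h0.le h1
    have h3 := hprox k (θ • u + (1 - θ) • x (k+1))
    rw [hcoe u hu, hcoe _ (hRx k), ← EReal.coe_mul, ← EReal.coe_mul, ← EReal.coe_add] at h2
    have h4 : R (θ • u + (1 - θ) • x (k+1)) ≠ ⊤ := ne_top_of_le_ne_top (EReal.coe_ne_top _) h2
    rw [hcoe _ h4, EReal.coe_le_coe_iff] at h2
    rw [hcoe _ h4, hcoe _ (hRx k), ← EReal.coe_mul, ← EReal.coe_mul, ← EReal.coe_add,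
      ← EReal.coe_add, EReal.coe_le_coe_iff] at h3
    have := mul_le_mul_of_nonneg_left h2 hγ0
    linarith
  intro K hK
  obtain ⟨K, rfl⟩ : ∃ m, K = m + 1 := ⟨K - 1, by omega⟩
  have hpos : (0:ℝ) < ((K + 1 : ℕ) : ℝ) + τ := by positivity
  by_cases hx0 : R (x 0) = ⊤ ∧ τ ≠ 0
  · have : P (x 0) - P xstar = ⊤ := by
      rw [hP (x 0), hx0.1, EReal.coe_add_top, hPcoe xstar hRs, EReal.top_sub_coe]
    rw [this, EReal.coe_mul_top_of_pos (by exact_mod_cast Nat.pos_of_ne_zero hx0.2),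
      EReal.coe_add_top, EReal.coe_mul_top_of_pos (by positivity)]
    exact le_top
  have hx0' : τ ≠ 0 → R (x 0) ≠ ⊤ := fun h h' => hx0 ⟨h', h⟩
  have key : (((K + 1 : ℕ) : ℝ) + τ) * (F (x (K+1)) + (R (x (K+1))).toReal
        - (F xstar + (R xstar).toReal))
      ≤ τ * (F (x 0) + (R (x 0)).toReal - (F xstar + (R xstar).toReal))
        + 1 / (2 * γ) * ‖x 0 - xstar‖ ^ 2 := by
    rcases subsingleton_or_nontrivial (EuclideanSpace ℝ (Fin d)) with hsub | hnt
    · rw [Subsingleton.elim (x (K+1)) xstar, Subsingleton.elim (x 0) xstar]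
      simp
    · have hLi0 : ∀ i, 0 ≤ Li i := by
        intro i
        obtain ⟨a, b, hab⟩ := exists_pair_ne (EuclideanSpace ℝ (Fin d))
        have h1 := (norm_nonneg _).trans (hLi i a b)
        exact nonneg_of_mul_nonneg_left h1 (norm_pos_iff.2 (sub_ne_zero.2 hab.symm))
      refine piag_real f Li hconv hdiff hLi0 hLi F hF L hLdef γ hγ τ s hs1 hs2 x g hg hL hγmax
        xstar (fun z => (R z).toReal) (fun k => hpr k xstar hRs) ?_ (K+1)
      intro k hk
      apply hpr
      rcases k with _ | k
      · exact hx0' (by simpa using hk)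
      · exact hRx k
  have hmain : ∀ c : ℝ, (((K + 1 : ℕ) : ℝ) + τ) * (F (x (K+1)) + (R (x (K+1))).toReal
        - (F xstar + (R xstar).toReal)) ≤ c →
      P (x (K+1)) - P xstar ≤ ((1 / (((K + 1 : ℕ) : ℝ) + (τ : ℝ)) : ℝ) : EReal) * (c : EReal) := by
    intro c hc
    rw [hPcoe _ (hRx K), hPcoe _ hRs, ← EReal.coe_sub, ← EReal.coe_mul, EReal.coe_le_coe_iff,
      one_div, inv_mul_eq_div, le_div_iff₀ hpos]
    linarith
  by_cases hτ : τ = 0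
  · subst hτ
    have e : (((0:ℕ):ℝ) : EReal) * (P (x 0) - P xstar) = ((0:ℝ):EReal) := by simp
    rw [e, ← EReal.coe_add]
    apply hmain
    simpa using key
  · rw [hPcoe _ (hx0' hτ)]
    have e : ((F xstar + (R xstar).toReal : ℝ) : EReal) = P xstar := (hPcoe _ hRs).symm
    have := hmain _ key
    rw [EReal.coe_add, EReal.coe_mul (τ:ℝ), EReal.coe_sub, e, add_comm (((τ:ℝ):EReal) * _)] at this
    exact this
end

section
/- Consider the PIAG setting and additionally assume the quadratic functional growth condition with constant μ > 0; let Q = L/μ. Let {x_k} be the PIAG iterates with maximum delay τ and step-size γ = h/(L·(2τ+1)) for some h ∈ (0,1]. Then for every k ≥ 0: (i) ‖x_k − Π_{X⋆}(x_k)‖² ≤ (1 − 1/(1 + (Q+1)(2τ+1)/h))^k · ( (2/L)·(P(x_0) − P⋆) + ‖x_0 − Π_{X⋆}(x_0)‖² ), and (ii) P(x_k) − P⋆ ≤ (1 − 1/(1 + (Q+1)(2τ+1)/h))^k · ( P(x_0) − P⋆ + (L/2)·‖x_0 − Π_{X⋆}(x_0)‖² ). -/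
lemma piag_double_sum (τ K : ℕ) (y : ℕ → ℝ) (hy : ∀ j, 0 ≤ y j) :
    ∑ k ∈ Finset.range K, ∑ j ∈ Finset.Ico (k - τ) k, y j ≤ τ * ∑ j ∈ Finset.range K, y j := by
  have e : ∑ k ∈ Finset.range K, ∑ j ∈ Finset.Ico (k - τ) k, y j
      = ∑ j ∈ Finset.range K, ∑ k ∈ Finset.Ico (j+1) (min (j+τ+1) K), y j := by
    apply Finset.sum_comm'
    intro a b
    simp only [Finset.mem_range, Finset.mem_Ico]
    omega
  rw [e, Finset.mul_sum]
  apply Finset.sum_le_sum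
  intro j _
  rw [Finset.sum_const, nsmul_eq_mul]
  apply mul_le_mul_of_nonneg_right _ (hy j)
  rw [Nat.card_Ico]
  exact_mod_cast (by omega)

lemma piag_seq (τ : ℕ) (V w : ℕ → ℝ) (q A B b : ℝ) (hw : ∀ j, 0 ≤ w j) (hq : 1 ≤ q)
    (hB : 0 ≤ B) (hqb : q ^ τ ≤ b) (hAB : B * b * τ ≤ A)
    (hV : ∀ k, q * V (k+1) ≤ V k - A * w k + B * ∑ j ∈ Finset.Ico (k - τ) k, w j) (K : ℕ) :
    q ^ K * V K ≤ V 0 := by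
  have hq0 : 0 < q := by linarith
  have h1 : ∀ K, q ^ K * V K ≤ V 0 - A * ∑ j ∈ Finset.range K, q ^ j * w j
      + B * b * ∑ k ∈ Finset.range K, ∑ j ∈ Finset.Ico (k - τ) k, q ^ j * w j := by
    intro K
    induction K with
    | zero => simp
    | succ k ih =>
      rw [Finset.sum_range_succ, Finset.sum_range_succ]
      have h2 : q ^ k * ∑ j ∈ Finset.Ico (k - τ) k, w j
          ≤ b * ∑ j ∈ Finset.Ico (k - τ) k, q ^ j * w j := by
        rw [Finset.mul_sum, Finset.mul_sum]
        apply Finset.sum_le_sum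
        intro j hj
        rw [Finset.mem_Ico] at hj
        have h3 : q ^ k ≤ b * q ^ j := by
          calc q ^ k ≤ q ^ (τ + j) := pow_le_pow_right₀ hq (by omega)
            _ = q ^ τ * q ^ j := pow_add _ _ _
            _ ≤ b * q ^ j := by gcongr
        have := mul_le_mul_of_nonneg_right h3 (hw j)
        linarith
      have h4 := mul_le_mul_of_nonneg_left (hV k) (pow_pos hq0 k).le
      have h5 := mul_le_mul_of_nonneg_left h2 hB
      rw [pow_succ]
      linarith
  have h2 := piag_double_sum τ K (fun j => q ^ j * w j) (fun j => mul_nonneg (pow_pos hq0 j).le (hw j))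
  have hb : 0 ≤ b := le_trans (pow_pos hq0 τ).le hqb
  have h3 := mul_le_mul_of_nonneg_left h2 (mul_nonneg hB hb)
  have h4 : 0 ≤ ∑ j ∈ Finset.range K, q ^ j * w j :=
    Finset.sum_nonneg (fun j _ => mul_nonneg (pow_pos hq0 j).le (hw j))
  have h5 := mul_le_mul_of_nonneg_right hAB h4
  have := h1 K
  linarith

lemma piag_pow (τ : ℕ) (θ : ℝ) (h0 : 0 ≤ θ) (h1 : θ ≤ 1 / (2 * τ + 1)) :
    (1 + θ) ^ τ ≤ (2 * τ + 1) / (τ + 1) := by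
  have hτ : (0:ℝ) ≤ τ := Nat.cast_nonneg _
  rw [le_div_iff₀ (by positivity)] at *
  have hθ1 : θ ≤ 1 := by nlinarith
  have hb := one_add_mul_le_pow (a := -θ) (by linarith) τ
  have hp : (1 + θ) ^ τ * (1 + -θ) ^ τ ≤ 1 := by
    rw [← mul_pow]
    apply pow_le_one₀ <;> nlinarith
  have hpos : 0 < (1 + θ) ^ τ := by positivity
  have h3 : (τ + 1) / (2 * τ + 1) ≤ 1 + τ * (-θ) := by
    rw [div_le_iff₀ (by positivity)]
    nlinarith
  have h4 : (1 + θ) ^ τ * ((τ + 1) / (2 * τ + 1)) ≤ 1 := by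
    refine le_trans ?_ hp
    exact mul_le_mul_of_nonneg_left (h3.trans hb) hpos.le
  rw [← mul_div_assoc, div_le_one (by positivity)] at h4
  exact h4

lemma piag_const (τ : ℕ) (L θ : ℝ) (hL : 0 < L) (h0 : 0 < θ) (h1 : θ ≤ 1 / (2 * τ + 1)) :
    (L / 2 * (1 + θ * (τ + 1))) * ((2 * τ + 1) / (τ + 1)) * τ
      ≤ L / 2 * (2 / θ - τ - θ * (τ + 1)) := by
  have hτ : (0:ℝ) ≤ τ := Nat.cast_nonneg _
  rw [mul_assoc, mul_assoc]
  apply mul_le_mul_of_nonneg_left _ (by positivity)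
  have h2 : 2 * (2 * (τ:ℝ) + 1) ≤ 2 / θ := by
    rw [le_div_iff₀ h0]
    rw [le_div_iff₀ (by positivity)] at h1
    linarith
  rw [le_div_iff₀ (by positivity)] at h1
  have h3 : θ * (τ + 1) * ((2 * τ + 1) / (τ + 1)) ≤ 1 := by
    rw [← mul_div_assoc, div_le_one (by positivity)]
    nlinarith
  have h4 : (2 * (τ:ℝ) + 1) / (τ + 1) ≤ 2 := by
    rw [div_le_iff₀ (by positivity)]; linarith
  have h5 : θ * (τ + 1) ≤ 1 := by nlinarith
  nlinarith

section

set_option linter.unusedSectionVars false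

variable {E : Type*} [NormedAddCommGroup E] [InnerProductSpace ℝ E] [CompleteSpace E]

lemma piag_line (f : E → ℝ) (hd : Differentiable ℝ f) (a v : E) (t : ℝ) :
    HasDerivAt (fun t : ℝ => f (a + t • v)) (inner ℝ (gradient f (a + t • v)) v) t := by
  have h1 : HasDerivAt (fun t : ℝ => a + t • v) v t := by
    simpa using ((hasDerivAt_id t).smul_const v).const_add a
  have h2 := (hd (a + t • v)).hasGradientAt.hasFDerivAt.comp_hasDerivAt t h1
  have h3 : (InnerProductSpace.toDual ℝ E (gradient f (a + t • v))) v
      = inner ℝ (gradient f (a + t • v)) v := InnerProductSpace.toDual_apply_apply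
  rw [← h3]
  exact h2

lemma piag_convex (f : E → ℝ) (hd : Differentiable ℝ f) (hc : ConvexOn ℝ Set.univ f) (a u : E) :
    f a + inner ℝ (gradient f a) (u - a) ≤ f u := by
  have hc' : ConvexOn ℝ Set.univ (fun t : ℝ => f (a + t • (u - a))) := by
    have := hc.comp_affineMap (AffineMap.lineMap a u : ℝ →ᵃ[ℝ] E)
    simp only [Set.preimage_univ] at this
    have e : (fun t : ℝ => f (a + t • (u - a))) = f ∘ (AffineMap.lineMap a u : ℝ →ᵃ[ℝ] E) := by
      funext t
      simp [AffineMap.lineMap_apply, add_comm]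
    rw [e]
    exact this
  have h := hc'.le_slope_of_hasDerivAt (x := 0) (y := 1) (Set.mem_univ _) (Set.mem_univ _) (by norm_num)
    (piag_line f hd a (u - a) 0)
  simp only [slope_def_field, zero_smul, one_smul, add_zero, add_sub_cancel, sub_zero, div_one] at h
  linarith

lemma piag_smooth (f : E → ℝ) (hd : Differentiable ℝ f) (l : ℝ)
    (hl : ∀ a b, ‖gradient f b - gradient f a‖ ≤ l * ‖b - a‖) (a u : E) :
    f u ≤ f a + inner ℝ (gradient f a) (u - a) + l / 2 * ‖u - a‖ ^ 2 := by
  set v := u - a with hv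
  have hder : ∀ t : ℝ, HasDerivAt (fun t : ℝ => f (a + t • v) - t * inner ℝ (gradient f a) v
      - l / 2 * ‖v‖ ^ 2 * t ^ 2)
      (inner ℝ (gradient f (a + t • v)) v - inner ℝ (gradient f a) v - l * ‖v‖ ^ 2 * t) t := by
    intro t
    have h := ((piag_line f hd a v t).sub ((hasDerivAt_id t).mul_const (inner ℝ (gradient f a) v))).sub
      (((hasDerivAt_id t).pow 2).const_mul (l / 2 * ‖v‖ ^ 2))
    refine h.congr_deriv ?_
    simp; ring
  have hanti := antitoneOn_of_deriv_nonpos (convex_Icc (0:ℝ) 1)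
    (fun t _ => (hder t).continuousAt.continuousWithinAt)
    (fun t _ => (hder t).differentiableAt.differentiableWithinAt)
    (by
      intro t ht
      rw [interior_Icc] at ht
      rw [(hder t).deriv, ← inner_sub_left]
      have h1 := real_inner_le_norm (gradient f (a + t • v) - gradient f a) v
      have h2 := hl a (a + t • v)
      rw [add_sub_cancel_left, norm_smul, Real.norm_of_nonneg ht.1.le] at h2
      nlinarith [norm_nonneg v])
  have h := hanti (Set.left_mem_Icc.2 zero_le_one) (Set.right_mem_Icc.2 zero_le_one) zero_le_one
  simp only [zero_smul, one_smul, add_zero, one_mul, zero_mul, sub_zero, one_pow, mul_one, ne_eq, OfNat.ofNat_ne_zero, not_false_eq_true, zero_pow, mul_zero] at h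
  rw [show a + v = u by simp [hv]] at h
  linarith

lemma piag_path (x : ℕ → E) (s k : ℕ) (h : s ≤ k) :
    ‖x k - x s‖ ≤ ∑ j ∈ Finset.Ico s k, ‖x (j+1) - x j‖ := by
  have := dist_le_Ico_sum_dist x h
  simpa [dist_eq_norm, norm_sub_rev] using this

lemma piag_A (f : E → ℝ) (hd : Differentiable ℝ f) (hc : ConvexOn ℝ Set.univ f) (l : ℝ) (hl0 : 0 ≤ l)
    (hl : ∀ a b, ‖gradient f b - gradient f a‖ ≤ l * ‖b - a‖) (x : ℕ → E) (τ s k : ℕ)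
    (h1 : k - τ ≤ s) (h2 : s ≤ k) (u : E) :
    f (x (k+1)) ≤ f u + inner ℝ (gradient f (x s)) (x (k+1) - u) + l / 2 * ((τ + 1) *
      (‖x (k+1) - x k‖ ^ 2 + ∑ j ∈ Finset.Ico (k - τ) k, ‖x (j+1) - x j‖ ^ 2)) := by
  have e1 := piag_smooth f hd l hl (x s) (x (k+1))
  have e2 := piag_convex f hd hc (x s) u
  have e3 : ‖x (k+1) - x s‖ ^ 2 ≤ (τ + 1) *
      (‖x (k+1) - x k‖ ^ 2 + ∑ j ∈ Finset.Ico (k - τ) k, ‖x (j+1) - x j‖ ^ 2) := by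
    rw [add_comm (‖x (k+1) - x k‖ ^ 2), ← Finset.sum_Ico_succ_top (by omega)
      (fun j => ‖x (j+1) - x j‖ ^ 2)]
    have p := piag_path x s (k+1) (by omega)
    calc ‖x (k+1) - x s‖ ^ 2 ≤ (∑ j ∈ Finset.Ico s (k+1), ‖x (j+1) - x j‖) ^ 2 := by gcongr
      _ ≤ (Finset.Ico s (k+1)).card * ∑ j ∈ Finset.Ico s (k+1), ‖x (j+1) - x j‖ ^ 2 :=
        sq_sum_le_card_mul_sum_sq
      _ ≤ (τ + 1) * ∑ j ∈ Finset.Ico (k - τ) (k+1), ‖x (j+1) - x j‖ ^ 2 := by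
        gcongr
        rw [Nat.card_Ico]
        exact_mod_cast (by omega)
  have e4 := mul_le_mul_of_nonneg_left e3 (by positivity : 0 ≤ l / 2)
  have e5 : inner ℝ (gradient f (x s)) (x (k+1) - u) = inner ℝ (gradient f (x s)) (x (k+1) - x s)
      - inner ℝ (gradient f (x s)) (u - x s) := by
    rw [← inner_sub_right]; congr 1; abel
  linarith

lemma piag_B (f : E → ℝ) (hd : Differentiable ℝ f) (l : ℝ) (hl0 : 0 ≤ l)
    (hl : ∀ a b, ‖gradient f b - gradient f a‖ ≤ l * ‖b - a‖) (x : ℕ → E) (τ s k : ℕ)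
    (h1 : k - τ ≤ s) (h2 : s ≤ k) :
    f (x (k+1)) ≤ f (x k) + inner ℝ (gradient f (x s)) (x (k+1) - x k) + l / 2 * ((τ + 1) *
      ‖x (k+1) - x k‖ ^ 2 + ∑ j ∈ Finset.Ico (k - τ) k, ‖x (j+1) - x j‖ ^ 2) := by
  have e1 := piag_smooth f hd l hl (x k) (x (k+1))
  have e2 : inner ℝ (gradient f (x k)) (x (k+1) - x k) - inner ℝ (gradient f (x s)) (x (k+1) - x k)
      ≤ l * ‖x k - x s‖ * ‖x (k+1) - x k‖ := by
    rw [← inner_sub_left]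
    refine (real_inner_le_norm _ _).trans ?_
    gcongr
    exact hl _ _
  have e3 : ‖x k - x s‖ * ‖x (k+1) - x k‖ ≤ 1 / 2 * (τ *
      ‖x (k+1) - x k‖ ^ 2 + ∑ j ∈ Finset.Ico (k - τ) k, ‖x (j+1) - x j‖ ^ 2) := by
    have p := piag_path x s k h2
    calc ‖x k - x s‖ * ‖x (k+1) - x k‖
        ≤ (∑ j ∈ Finset.Ico s k, ‖x (j+1) - x j‖) * ‖x (k+1) - x k‖ := by gcongr
      _ = ∑ j ∈ Finset.Ico s k, ‖x (j+1) - x j‖ * ‖x (k+1) - x k‖ := Finset.sum_mul _ _ _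
      _ ≤ ∑ j ∈ Finset.Ico s k, 1 / 2 * (‖x (k+1) - x k‖ ^ 2 + ‖x (j+1) - x j‖ ^ 2) := by
        apply Finset.sum_le_sum
        intro j _
        nlinarith [sq_nonneg (‖x (j+1) - x j‖ - ‖x (k+1) - x k‖)]
      _ = 1 / 2 * ((Finset.Ico s k).card * ‖x (k+1) - x k‖ ^ 2 +
          ∑ j ∈ Finset.Ico s k, ‖x (j+1) - x j‖ ^ 2) := by
        rw [← Finset.mul_sum, Finset.sum_add_distrib, Finset.sum_const, nsmul_eq_mul]
      _ ≤ _ := by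
        gcongr
        rw [Nat.card_Ico]
        omega
  have e4 := mul_le_mul_of_nonneg_left e3 hl0
  linarith

lemma piag_avg {n : ℕ} (hn : 0 < n) (a b l : Fin n → ℝ) (gr : Fin n → E) (v : E) (C : ℝ)
    (h : ∀ i, a i ≤ b i + inner ℝ (gr i) v + l i / 2 * C) :
    (1 / (n:ℝ)) * ∑ i, a i ≤ (1 / (n:ℝ)) * ∑ i, b i + inner ℝ ((1 / (n:ℝ)) • ∑ i, gr i) v
      + ((1 / (n:ℝ)) * ∑ i, l i) / 2 * C := by
  have h1 := Finset.sum_le_sum (fun i (_ : i ∈ Finset.univ) => h i)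
  have h2 := mul_le_mul_of_nonneg_left h1 (by positivity : 0 ≤ 1 / (n:ℝ))
  refine h2.trans (le_of_eq ?_)
  rw [Finset.sum_add_distrib, Finset.sum_add_distrib, real_inner_smul_left, sum_inner,
    ← Finset.sum_mul, ← Finset.sum_div]
  ring

lemma piag_prox (R : E → EReal) (γ : ℝ) (hγ : 0 < γ) (y z : E) (hbot : ∀ z, R z ≠ ⊥)
    (hRconvex : ∀ z w : E, ∀ θ : ℝ, 0 ≤ θ → θ ≤ 1 →
      R (θ • z + (1 - θ) • w) ≤ (θ : EReal) * R z + ((1 - θ : ℝ) : EReal) * R w)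
    (hp : ∀ u : E, (((1 / 2) * ‖y - z‖ ^ 2 : ℝ) : EReal) + (γ : EReal) * R y
        ≤ (((1 / 2) * ‖u - z‖ ^ 2 : ℝ) : EReal) + (γ : EReal) * R u)
    (u : E) (hu : R u ≠ ⊤) :
    R y ≠ ⊤ ∧ γ * ((R y).toReal - (R u).toReal) ≤ inner ℝ (y - z) (u - y) := by
  have hy : R y ≠ ⊤ := by
    intro hy
    have h := hp u
    rw [hy, EReal.coe_mul_top_of_pos hγ, EReal.coe_add_top] at h
    lift R u to ℝ using ⟨hu, hbot u⟩ with ru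
    rw [← EReal.coe_mul, ← EReal.coe_add] at h
    exact absurd h (not_le.2 (EReal.coe_lt_top _))
  refine ⟨hy, ?_⟩
  obtain ⟨ry, hry⟩ : ∃ r : ℝ, R y = r := ⟨_, (EReal.coe_toReal hy (hbot y)).symm⟩
  obtain ⟨ru, hru⟩ : ∃ r : ℝ, R u = r := ⟨_, (EReal.coe_toReal hu (hbot u)).symm⟩
  rw [hry, hru, EReal.toReal_coe, EReal.toReal_coe]
  have key : ∀ t : ℝ, 0 < t → t ≤ 1 →
      γ * (ry - ru) ≤ inner ℝ (y - z) (u - y) + t * (1 / 2 * ‖u - y‖ ^ 2) := by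
    intro t ht ht1
    have h1 := hRconvex u y t ht.le ht1
    have h2 := hp (t • u + (1 - t) • y)
    have hne : R (t • u + (1 - t) • y) ≠ ⊤ := by
      intro hh
      rw [hh, hry, hru, ← EReal.coe_mul, ← EReal.coe_mul, ← EReal.coe_add] at h1
      exact absurd h1 (not_le.2 (EReal.coe_lt_top _))
    obtain ⟨rt, hrt⟩ : ∃ r : ℝ, R (t • u + (1 - t) • y) = r :=
      ⟨_, (EReal.coe_toReal hne (hbot _)).symm⟩
    rw [hrt, hry, hru] at h1
    rw [hrt, hry] at h2
    norm_cast at h1 h2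
    have e : t • u + (1 - t) • y - z = (y - z) + t • (u - y) := by module
    rw [e, norm_add_sq_real, real_inner_smul_right, norm_smul, mul_pow, Real.norm_eq_abs, sq_abs] at h2
    have h3 := mul_le_mul_of_nonneg_left h1 hγ.le
    have h4 : t * (γ * (ry - ru)) ≤ t * (inner ℝ (y - z) (u - y) + t * (1 / 2 * ‖u - y‖ ^ 2)) := by
      linarith
    exact le_of_mul_le_mul_left h4 ht
  by_contra hcon
  push Not at hcon
  set c := 1 / 2 * ‖u - y‖ ^ 2 with hc
  have hc0 : 0 ≤ c := by positivity
  set ε := γ * (ry - ru) - inner ℝ (y - z) (u - y) with hε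
  have hε0 : 0 < ε := by linarith
  have hk := key (min 1 (ε / (2 * (c + 1)))) (by positivity) (min_le_left _ _)
  have h5 : min 1 (ε / (2 * (c + 1))) * c ≤ ε / (2 * (c + 1)) * c :=
    mul_le_mul_of_nonneg_right (min_le_right _ _) hc0
  have h6 : ε / (2 * (c + 1)) * c < ε := by
    rw [div_mul_eq_mul_div, div_lt_iff₀ (by positivity)]
    nlinarith
  linarith

/-- The combined one-step inequality, in real form. -/
lemma piag_step (τ : ℕ) (L γ θ Q Δ Δ' D D' w S : ℝ) (hL : 0 < L) (hγ : 0 < γ) (hθ : θ = L * γ) (hQ : 0 < Q)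
    (hA : γ * Δ' + 1 / 2 * D' ≤ 1 / 2 * D - 1 / 2 * w + γ * (L / 2 * ((τ + 1) * (w + S))))
    (hB : γ * Δ' ≤ γ * Δ - w + γ * (L / 2 * ((τ + 1) * w + S)))
    (hg : L / 2 * D' ≤ Q * Δ') :
    (1 + θ / (1 + Q)) * (Δ' + L / 2 * D') ≤ (Δ + L / 2 * D) - L / 2 * (2 / θ - τ - θ * (τ + 1)) * w
      + L / 2 * (1 + θ * (τ + 1)) * S := by
  have hθ0 : 0 < θ := by rw [hθ]; positivity
  have h1 : θ / (1 + Q) * (Δ' + L / 2 * D') ≤ θ * Δ' := by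
    rw [div_mul_eq_mul_div, div_le_iff₀ (by positivity)]
    nlinarith
  have hA' := mul_le_mul_of_nonneg_left hA hL.le
  have hB' : Δ' ≤ Δ - L / θ * w + L / 2 * ((τ + 1) * w + S) := by
    have e : L / θ = 1 / γ := by rw [hθ]; field_simp
    rw [e]
    have : γ * Δ' ≤ γ * (Δ - 1 / γ * w + L / 2 * ((τ + 1) * w + S)) := by
      refine hB.trans (le_of_eq ?_)
      field_simp
    exact le_of_mul_le_mul_left this hγ
  have e2 : L / 2 * (2 / θ - τ - θ * (τ + 1)) = L / θ - L / 2 * (τ + θ * (τ + 1)) := by ring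
  rw [e2]
  have hA2 : θ * Δ' + L / 2 * D' ≤ L / 2 * D - L / 2 * w + θ * (L / 2 * ((τ + 1) * (w + S))) := by
    rw [hθ]; linarith
  linarith

end

/-- Theorem 2 (PIAG under quadratic functional growth): with `Q = L/μ` and
step-size `γ = h/(L(2τ+1))`, `h ∈ (0,1]`, for every `k ≥ 0`:
(i) `‖x_k − Π(x_k)‖² ≤ ρ^k ((2/L)(P(x_0) − P⋆) + ‖x_0 − Π(x_0)‖²)` and
(ii) `P(x_k) − P⋆ ≤ ρ^k (P(x_0) − P⋆ + (L/2)‖x_0 − Π(x_0)‖²)`,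
where `ρ = 1 − 1/(1 + (Q+1)(2τ+1)/h)`.  `Π = Π_{X⋆}` is encoded as a map `Pi`
whose values are optimal and minimize the distance to the optimal set; the
regularizer `R` is `EReal`-valued, so both bounds are stated in `EReal`. -/
theorem piag_quadratic_growth_linear_rate
    {d n : ℕ} (hn : 0 < n)
    (f : Fin n → EuclideanSpace ℝ (Fin d) → ℝ)
    (Li : Fin n → ℝ)
    (hconv : ∀ i, ConvexOn ℝ Set.univ (f i))
    (hdiff : ∀ i, Differentiable ℝ (f i))
    (hLi : ∀ i, ∀ a b : EuclideanSpace ℝ (Fin d),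
      ‖gradient (f i) b - gradient (f i) a‖ ≤ Li i * ‖b - a‖)
    (R : EuclideanSpace ℝ (Fin d) → EReal)
    (hRne_top : ∃ z, R z ≠ ⊤)
    (hRne_bot : ∀ z, R z ≠ ⊥)
    (hRconvex : ∀ z w : EuclideanSpace ℝ (Fin d), ∀ θ : ℝ, 0 ≤ θ → θ ≤ 1 →
      R (θ • z + (1 - θ) • w) ≤ (θ : EReal) * R z + ((1 - θ : ℝ) : EReal) * R w)
    (hRclosed : LowerSemicontinuous R)
    (F : EuclideanSpace ℝ (Fin d) → ℝ)
    (hF : ∀ z, F z = (1 / (n : ℝ)) * ∑ i, f i z)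
    (L : ℝ) (hLdef : L = (1 / (n : ℝ)) * ∑ i, Li i)
    (P : EuclideanSpace ℝ (Fin d) → EReal)
    (hP : ∀ z, P z = (F z : EReal) + R z)
    (γ : ℝ) (hγ : 0 < γ) (τ : ℕ)
    (s : Fin n → ℕ → ℕ)
    (hs1 : ∀ i k, k - τ ≤ s i k) (hs2 : ∀ i k, s i k ≤ k)
    (x : ℕ → EuclideanSpace ℝ (Fin d))
    (g : ℕ → EuclideanSpace ℝ (Fin d))
    (hg : ∀ k, g k = (1 / (n : ℝ)) • ∑ i, gradient (f i) (x (s i k)))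
    (hprox : ∀ k : ℕ, ∀ u : EuclideanSpace ℝ (Fin d),
      (((1 / 2) * ‖x (k + 1) - (x k - γ • g k)‖ ^ 2 : ℝ) : EReal)
          + (γ : EReal) * R (x (k + 1))
        ≤ (((1 / 2) * ‖u - (x k - γ • g k)‖ ^ 2 : ℝ) : EReal) + (γ : EReal) * R u)
    (hL : 0 < L)
    (xstar : EuclideanSpace ℝ (Fin d))
    (hxstar : ∀ y, P xstar ≤ P y)
    (Pi : EuclideanSpace ℝ (Fin d) → EuclideanSpace ℝ (Fin d))
    (hPiopt : ∀ z, ∀ y, P (Pi z) ≤ P y)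
    (hPinear : ∀ z y, (∀ w, P y ≤ P w) → ‖z - Pi z‖ ≤ ‖z - y‖)
    (μ : ℝ) (hμ : 0 < μ)
    (hgrowth : ∀ z, R z ≠ ⊤ →
      ((μ / 2 * ‖z - Pi z‖ ^ 2 : ℝ) : EReal) ≤ P z - P xstar)
    (Q : ℝ) (hQ : Q = L / μ)
    (h : ℝ) (hh0 : 0 < h) (hh1 : h ≤ 1)
    (hγdef : γ = h / (L * (2 * (τ : ℝ) + 1))) :
    ∀ k : ℕ,
      ((‖x k - Pi (x k)‖ ^ 2 : ℝ) : EReal)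
        ≤ (((1 - 1 / (1 + (Q + 1) * (2 * (τ : ℝ) + 1) / h)) ^ k : ℝ) : EReal) *
            (((2 / L : ℝ) : EReal) * (P (x 0) - P xstar)
              + ((‖x 0 - Pi (x 0)‖ ^ 2 : ℝ) : EReal)) ∧
      P (x k) - P xstar
        ≤ (((1 - 1 / (1 + (Q + 1) * (2 * (τ : ℝ) + 1) / h)) ^ k : ℝ) : EReal) *
            ((P (x 0) - P xstar)
              + ((L / 2 * ‖x 0 - Pi (x 0)‖ ^ 2 : ℝ) : EReal)) := by
  classical
  -- nonnegative smoothness constants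
  obtain ⟨l, hl0, hlL, hl⟩ : ∃ l : Fin n → ℝ, (∀ i, 0 ≤ l i) ∧ L = (1 / (n : ℝ)) * ∑ i, l i ∧
      ∀ i, ∀ a b : EuclideanSpace ℝ (Fin d),
        ‖gradient (f i) b - gradient (f i) a‖ ≤ l i * ‖b - a‖ := by
    by_cases hsub : ∀ a b : EuclideanSpace ℝ (Fin d), a = b
    · refine ⟨fun _ => L, fun _ => hL.le, ?_, ?_⟩
      · rw [Finset.sum_const, Finset.card_univ, Fintype.card_fin, nsmul_eq_mul]
        have : (n : ℝ) ≠ 0 := by positivity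
        field_simp
      · intro i a b
        rw [hsub a b]
        simp
    · push Not at hsub
      obtain ⟨a, b, hab⟩ := hsub
      refine ⟨Li, fun i => ?_, hLdef, hLi⟩
      have h1 := (norm_nonneg _).trans (hLi i a b)
      have h2 : 0 < ‖b - a‖ := norm_pos_iff.2 (sub_ne_zero.2 (Ne.symm hab))
      exact nonneg_of_mul_nonneg_left h1 h2
  have hτ : (0:ℝ) ≤ τ := Nat.cast_nonneg _
  have hQ0 : 0 < Q := by rw [hQ]; positivity
  -- the optimal value is finite
  obtain ⟨z0, hz0⟩ := hRne_top
  have hPtop : ∀ z, R z ≠ ⊤ → P z = ((F z + (R z).toReal : ℝ) : EReal) := by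
    intro z hz
    rw [hP, EReal.coe_add, EReal.coe_toReal hz (hRne_bot z)]
  have hRstar : ∀ y, (∀ w, P y ≤ P w) → R y ≠ ⊤ := by
    intro y hy hh
    have h1 := hy z0
    rw [hP y, hh, hPtop z0 hz0, EReal.coe_add_top] at h1
    exact absurd h1 (not_le.2 (EReal.coe_lt_top _))
  set Ps : ℝ := F xstar + (R xstar).toReal with hPs
  have hPstar : P xstar = (Ps : EReal) := hPtop _ (hRstar _ hxstar)
  have hPPi : ∀ z, F (Pi z) + (R (Pi z)).toReal = Ps := by
    intro z
    have h1 := le_antisymm (hPiopt z xstar) (hxstar (Pi z))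
    rw [hPstar, hPtop _ (hRstar _ (hPiopt z))] at h1
    exact_mod_cast h1
  set θ : ℝ := L * γ with hθ
  have hθ0 : 0 < θ := by positivity
  have hθh : θ = h / (2 * τ + 1) := by
    rw [hθ, hγdef]
    field_simp
  have hθ1 : θ ≤ 1 / (2 * τ + 1) := by
    rw [hθh]; gcongr
  set q : ℝ := 1 + θ / (1 + Q) with hq
  have hq1 : 1 ≤ q := by rw [hq]; have : 0 ≤ θ / (1 + Q) := by positivity
                         linarith
  have hρ : 1 - 1 / (1 + (Q + 1) * (2 * (τ : ℝ) + 1) / h) = q⁻¹ := by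
    rw [hq, hθh]
    field_simp
    ring
  rw [hρ]
  have hq0 : 0 < q := by linarith
  by_cases hx0 : R (x 0) = ⊤
  · -- infinite initial value
    intro k
    have hPx0 : P (x 0) - P xstar = ⊤ := by
      rw [hP (x 0), hx0, EReal.coe_add_top, hPstar, EReal.top_sub_coe]
    have hpk : 0 < (q⁻¹) ^ k := by positivity
    rw [hPx0, EReal.coe_mul_top_of_pos (by positivity), EReal.top_add_coe, EReal.top_add_coe,
      EReal.coe_mul_top_of_pos hpk]
    exact ⟨le_top, le_top⟩
  have hxk : ∀ k, R (x k) ≠ ⊤ := by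
    intro k
    cases k with
    | zero => exact hx0
    | succ k => exact (piag_prox R γ hγ _ _ hRne_bot hRconvex (hprox k) z0 hz0).1
  set Δ : ℕ → ℝ := fun k => F (x k) + (R (x k)).toReal - Ps with hΔ
  set D : ℕ → ℝ := fun k => ‖x k - Pi (x k)‖ ^ 2 with hD
  set w : ℕ → ℝ := fun k => ‖x (k + 1) - x k‖ ^ 2 with hw
  have hPΔ : ∀ k, P (x k) - P xstar = ((Δ k : ℝ) : EReal) := by
    intro k
    rw [hPtop _ (hxk k), hPstar, ← EReal.coe_sub]
  have hgr : ∀ k, μ / 2 * D k ≤ Δ k := by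
    intro k
    have h1 := hgrowth (x k) (hxk k)
    rw [hPΔ] at h1
    exact_mod_cast h1
  have hD0 : ∀ k, 0 ≤ D k := fun k => by simp only [hD]; positivity
  have hgr2 : ∀ k, L / 2 * D k ≤ Q * Δ k := by
    intro k
    have h1 := mul_le_mul_of_nonneg_left (hgr k) hQ0.le
    have h2 : Q * (μ / 2 * D k) = L / 2 * D k := by rw [hQ]; field_simp
    linarith
  have hΔ0 : ∀ k, 0 ≤ Δ k := fun k => le_trans (by have := hD0 k; positivity) (hgr k)
  have hstep : ∀ k, q * (Δ (k+1) + L / 2 * D (k+1)) ≤ (Δ k + L / 2 * D k)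
      - L / 2 * (2 / θ - τ - θ * (τ + 1)) * w k
      + L / 2 * (1 + θ * (τ + 1)) * ∑ j ∈ Finset.Ico (k - τ) k, w j := by
    intro k
    have hpx := fun u hu => (piag_prox R γ hγ _ _ hRne_bot hRconvex (hprox k) u hu).2
    refine piag_step τ L γ θ Q _ _ _ _ _ _ hL hγ hθ hQ0 ?_ ?_ (hgr2 (k+1))
    · have hp := hpx (Pi (x k)) (hRstar _ (hPiopt _))
      have ha := piag_avg hn (fun i => f i (x (k+1))) (fun i => f i (Pi (x k))) l
        (fun i => gradient (f i) (x (s i k))) (x (k+1) - Pi (x k)) _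
        (fun i => piag_A (f i) (hdiff i) (hconv i) (l i) (hl0 i) (hl i) x τ (s i k) k
          (hs1 i k) (hs2 i k) (Pi (x k)))
      rw [← hF, ← hF, ← hlL, ← hg] at ha
      have hn2 := hPinear (x (k+1)) (Pi (x k)) (hPiopt _)
      have hn3 : D (k+1) ≤ ‖x (k+1) - Pi (x k)‖ ^ 2 := by
        simp only [hD]
        gcongr
      have e1 : inner ℝ (x (k+1) - (x k - γ • g k)) (Pi (x k) - x (k+1))
          = 1 / 2 * D k - 1 / 2 * ‖x (k+1) - Pi (x k)‖ ^ 2 - 1 / 2 * w k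
            - γ * inner ℝ (g k) (x (k+1) - Pi (x k)) := by
        have e2 : x (k+1) - (x k - γ • g k) = (x (k+1) - x k) + γ • g k := by abel
        have e3 : x k - Pi (x k) = (x (k+1) - Pi (x k)) - (x (k+1) - x k) := by abel
        have e4 : Pi (x k) - x (k+1) = -(x (k+1) - Pi (x k)) := by abel
        simp only [hD, hw]
        rw [e2, e3, e4, inner_neg_right, inner_add_left, real_inner_smul_left, norm_sub_sq_real,
          real_inner_comm (x (k+1) - x k)]
        ring
      rw [e1] at hp
      have hm := mul_le_mul_of_nonneg_left ha hγ.le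
      have hpi := hPPi (x k)
      have e5 : γ * Δ (k+1) = γ * F (x (k+1)) - γ * F (Pi (x k))
          + γ * ((R (x (k+1))).toReal - (R (Pi (x k))).toReal) := by
        simp only [hΔ]; rw [← hpi]; ring
      rw [e5]
      linarith
    · have hp := hpx (x k) (hxk k)
      have ha := piag_avg hn (fun i => f i (x (k+1))) (fun i => f i (x k)) l
        (fun i => gradient (f i) (x (s i k))) (x (k+1) - x k) _
        (fun i => piag_B (f i) (hdiff i) (l i) (hl0 i) (hl i) x τ (s i k) k
          (hs1 i k) (hs2 i k))
      rw [← hF, ← hF, ← hlL, ← hg] at ha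
      have e1 : inner ℝ (x (k+1) - (x k - γ • g k)) (x k - x (k+1))
          = - w k - γ * inner ℝ (g k) (x (k+1) - x k) := by
        have e2 : x (k+1) - (x k - γ • g k) = (x (k+1) - x k) + γ • g k := by abel
        have e4 : x k - x (k+1) = -(x (k+1) - x k) := by abel
        simp only [hw]
        rw [e2, e4, inner_neg_right, inner_add_left, real_inner_smul_left,
          real_inner_self_eq_norm_sq]
        ring
      rw [e1] at hp
      have hm := mul_le_mul_of_nonneg_left ha hγ.le
      have e5 : γ * Δ (k+1) = γ * Δ k + γ * F (x (k+1)) - γ * F (x k)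
          + γ * ((R (x (k+1))).toReal - (R (x k)).toReal) := by
        simp only [hΔ]; ring
      rw [e5]
      linarith
  have hqb : q ^ τ ≤ (2 * τ + 1) / (τ + 1) := by
    refine le_trans ?_ (piag_pow τ θ hθ0.le hθ1)
    have : q ≤ 1 + θ := by
      have : θ / (1 + Q) ≤ θ := div_le_self hθ0.le (by linarith)
      linarith
    gcongr
  intro k
  have hmain := piag_seq τ (fun k => Δ k + L / 2 * D k) w q _ _ _
    (fun j => by simp only [hw]; positivity) hq1 (by positivity) hqb
    (piag_const τ L θ hL hθ0 hθ1) hstep k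
  have hmain2 : Δ k + L / 2 * D k ≤ (q⁻¹) ^ k * (Δ 0 + L / 2 * D 0) := by
    rw [inv_pow, ← div_eq_inv_mul, le_div_iff₀ (by positivity)]
    linarith
  rw [hPΔ, hPΔ]
  constructor
  · have h1 : D k ≤ (q⁻¹) ^ k * (2 / L * Δ 0 + D 0) := by
      have h2 : L / 2 * D k ≤ L / 2 * ((q⁻¹) ^ k * (2 / L * Δ 0 + D 0)) := by
        have e : L / 2 * ((q⁻¹) ^ k * (2 / L * Δ 0 + D 0)) = (q⁻¹) ^ k * (Δ 0 + L / 2 * D 0) := by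
          field_simp
        rw [e]
        linarith [hΔ0 k]
      exact le_of_mul_le_mul_left h2 (by positivity)
    rw [← EReal.coe_mul, ← EReal.coe_add, ← EReal.coe_mul]
    exact EReal.coe_le_coe_iff.2 h1
  · have h1 : Δ k ≤ (q⁻¹) ^ k * (Δ 0 + L / 2 * D 0) := by
      have : 0 ≤ L / 2 * D k := by have := hD0 k; positivity
      linarith
    rw [← EReal.coe_add, ← EReal.coe_mul]
    exact EReal.coe_le_coe_iff.2 h1
end

section
/- Consider the asynchronous fixed-point setting with T a pseudo-contraction with respect to the block-maximum norm with contraction modulus c ∈ (0,1) and fixed point x⋆. Let V_k = ‖x_k − x⋆‖ in the block-maximum norm. Then the iterates {x_k} of the asynchronous iteration satisfy V_{k+1} ≤ c · max_{(k−τ_k)_+ ≤ ℓ ≤ k} V_ℓ for all k ≥ 0, where τ_k = k − min_{i∈[m]} min_{j∈[m]} s_{ij, t_i(k)}. -/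
/-- Lemma 7 (Section `ContractiveMapping`, Lemma 1): for the asynchronous
iteration of a block-maximum-norm pseudo-contraction `T` with modulus `c`,
the Lyapunov function `V_k = ‖x_k − x⋆‖` (block-maximum norm) satisfies
`V_{k+1} ≤ c · max_{(k−τ_k)_+ ≤ ℓ ≤ k} V_ℓ`, where
`τ_k = k − min_i min_j s_{ij, t_i(k)}` and `t_i(k)` is the most recent update
time of agent `i`.  Each block is a finite-dimensional real normed space
(modelling `ℝ^{d_i}` with an arbitrary norm), `(·)_+` is truncated natural
subtraction. -/
theorem async_pseudocontraction_lyapunov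
    {m : ℕ} (hm : 0 < m)
    (Bl : Fin m → Type*) [∀ i, NormedAddCommGroup (Bl i)]
    [∀ i, NormedSpace ℝ (Bl i)] [∀ i, FiniteDimensional ℝ (Bl i)]
    (w : Fin m → ℝ) (hw : ∀ i, 0 < w i)
    (bmNorm : (∀ i, Bl i) → ℝ)
    (hbm : ∀ z : ∀ i, Bl i, bmNorm z =
      (Finset.univ : Finset (Fin m)).sup'
        (Finset.univ_nonempty_iff.mpr ⟨⟨0, hm⟩⟩) (fun i => w i * ‖z i‖))
    (T : (∀ i, Bl i) → (∀ i, Bl i))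
    (c : ℝ) (hc0 : 0 < c) (hc1 : c < 1)
    (xstar : ∀ i, Bl i) (hfix : T xstar = xstar)
    (hcontr : ∀ z, bmNorm (T z - xstar) ≤ c * bmNorm (z - xstar))
    (K : Fin m → Set ℕ) (hK0 : ∀ i, 0 ∈ K i)
    (s : Fin m → Fin m → ℕ → ℕ)
    (hs_le : ∀ i j k, s i j k ≤ k)
    (x : ℕ → ∀ i, Bl i)
    (hupd : ∀ k : ℕ, ∀ i, k ∈ K i → x (k + 1) i = T (fun j => x (s i j k) j) i)
    (hskip : ∀ k : ℕ, ∀ i, k ∉ K i → x (k + 1) i = x k i)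
    (t : Fin m → ℕ → ℕ)
    (ht_mem : ∀ i k, t i k ≤ k ∧ t i k ∈ K i)
    (ht_max : ∀ i k κ, κ ≤ k → κ ∈ K i → κ ≤ t i k)
    (τk : ℕ → ℕ)
    (hτk : ∀ k, τk k = k -
      (Finset.univ : Finset (Fin m)).inf'
        (Finset.univ_nonempty_iff.mpr ⟨⟨0, hm⟩⟩)
        (fun i => (Finset.univ : Finset (Fin m)).inf'
          (Finset.univ_nonempty_iff.mpr ⟨⟨0, hm⟩⟩)
          (fun j => s i j (t i k))))
    (V : ℕ → ℝ) (hV : ∀ k, V k = bmNorm (x k - xstar)) :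
    ∀ k : ℕ, V (k + 1) ≤
      c * (Finset.Icc (k - τk k) k).sup'
            (Finset.nonempty_Icc.mpr (Nat.sub_le k (τk k))) V := by
  intro k
  have hstay : ∀ i d, t i k + d ≤ k → x (t i k + d + 1) i = x (t i k + 1) i := by
    intro i d
    induction d with
    | zero => intro _; rfl
    | succ d ih =>
      intro h
      have h1 := ih (by omega)
      have hn : t i k + (d + 1) ∉ K i := by
        intro hmem
        have := ht_max i k _ h hmem
        omega
      rw [hskip _ i hn]
      exact h1
  have hlast : ∀ i, x (k + 1) i = T (fun j => x (s i j (t i k)) j) i := by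
    intro i
    have h1 := hstay i (k - t i k) (by have := (ht_mem i k).1; omega)
    have h2 : t i k + (k - t i k) = k := by have := (ht_mem i k).1; omega
    rw [h2] at h1
    rw [h1, hupd _ i (ht_mem i k).2]
  have hle : ∀ (z : ∀ i, Bl i) i, w i * ‖z i‖ ≤ bmNorm z := by
    intro z i
    rw [hbm]
    exact Finset.le_sup' (fun i => w i * ‖z i‖) (Finset.mem_univ i)
  rw [hV, hbm]
  apply Finset.sup'_le
  intro i _
  have h1 : w i * ‖(x (k + 1) - xstar) i‖
      ≤ bmNorm (T (fun j => x (s i j (t i k)) j) - xstar) := by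
    have := hle (T (fun j => x (s i j (t i k)) j) - xstar) i
    rw [Pi.sub_apply] at this ⊢
    rwa [hlast i]
  refine h1.trans ((hcontr _).trans (mul_le_mul_of_nonneg_left ?_ hc0.le))
  rw [hbm]
  apply Finset.sup'_le
  intro j _
  have h2 : w j * ‖(x (s i j (t i k)) - xstar) j‖ ≤ V (s i j (t i k)) := by
    rw [hV]; exact hle _ j
  refine le_trans h2 (Finset.le_sup' V ?_)
  rw [Finset.mem_Icc]
  have h3 := hs_le i j (t i k)
  have h4 := (ht_mem i k).1
  refine ⟨?_, h3.trans h4⟩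
  have h5 := (Finset.inf'_le (fun i => (Finset.univ : Finset (Fin m)).inf'
          (Finset.univ_nonempty_iff.mpr ⟨⟨0, hm⟩⟩)
          (fun j => s i j (t i k))) (Finset.mem_univ i)).trans
      (Finset.inf'_le (fun j => s i j (t i k)) (Finset.mem_univ j))
  have h6 := hτk k
  omega
end

section
/- Consider the asynchronous fixed-point setting with T a pseudo-contraction with respect to the block-maximum norm with contraction modulus c ∈ (0,1). Assume total asynchronism: each set K_i is an infinite subset of ℕ₀, and lim_{k→∞} s_{ij,k} = +∞ for all i, j ∈ [m] (the limit taken along k ∈ K_i). Then the iterates {x_k} of the asynchronous iteration converge to the unique fixed point x⋆ of T, i.e., ‖x_k − x⋆‖ → 0 in the block-maximum norm. -/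
/-- Theorem 5 (total asynchronism): if each update-time set `K_i` is infinite
and the information times satisfy `s_{ij,k} → ∞` along `k ∈ K_i`, then the
asynchronous iterates of a block-maximum-norm pseudo-contraction converge to
its (unique) fixed point `x⋆`, i.e. `‖x_k − x⋆‖ → 0` in the block-maximum
norm.  Each block is a finite-dimensional real normed space. -/
theorem async_pseudocontraction_total_asynchronism
    {m : ℕ} (hm : 0 < m)
    (Bl : Fin m → Type*) [∀ i, NormedAddCommGroup (Bl i)]
    [∀ i, NormedSpace ℝ (Bl i)] [∀ i, FiniteDimensional ℝ (Bl i)]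
    (w : Fin m → ℝ) (hw : ∀ i, 0 < w i)
    (bmNorm : (∀ i, Bl i) → ℝ)
    (hbm : ∀ z : ∀ i, Bl i, bmNorm z =
      (Finset.univ : Finset (Fin m)).sup'
        (Finset.univ_nonempty_iff.mpr ⟨⟨0, hm⟩⟩) (fun i => w i * ‖z i‖))
    (T : (∀ i, Bl i) → (∀ i, Bl i))
    (c : ℝ) (hc0 : 0 < c) (hc1 : c < 1)
    (xstar : ∀ i, Bl i) (hfix : T xstar = xstar)
    (hcontr : ∀ z, bmNorm (T z - xstar) ≤ c * bmNorm (z - xstar))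
    (K : Fin m → Set ℕ) (hK0 : ∀ i, 0 ∈ K i)
    (s : Fin m → Fin m → ℕ → ℕ)
    (hs_le : ∀ i j k, s i j k ≤ k)
    (x : ℕ → ∀ i, Bl i)
    (hupd : ∀ k : ℕ, ∀ i, k ∈ K i → x (k + 1) i = T (fun j => x (s i j k) j) i)
    (hskip : ∀ k : ℕ, ∀ i, k ∉ K i → x (k + 1) i = x k i)
    (hKinf : ∀ i, (K i).Infinite)
    (hslim : ∀ i j, Filter.Tendsto (fun k => s i j k)
      (Filter.atTop ⊓ Filter.principal (K i)) Filter.atTop) :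
    Filter.Tendsto (fun k => bmNorm (x k - xstar)) Filter.atTop (nhds 0) := by
  have hle : ∀ z : (∀ i, Bl i), ∀ i, w i * ‖z i‖ ≤ bmNorm z := by
    intro z i
    rw [hbm]
    exact Finset.le_sup' (fun i => w i * ‖z i‖) (Finset.mem_univ i)
  have hsup : ∀ (z : ∀ i, Bl i) (B : ℝ), (∀ i, w i * ‖z i‖ ≤ B) → bmNorm z ≤ B := by
    intro z B h
    rw [hbm]
    exact Finset.sup'_le _ _ (fun i _ => h i)
  have hnn : ∀ z : (∀ i, Bl i), 0 ≤ bmNorm z := fun z =>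
    le_trans (mul_nonneg (hw ⟨0, hm⟩).le (norm_nonneg _)) (hle z ⟨0, hm⟩)
  have hstep : ∀ (B : ℝ) (z : ∀ i, Bl i), (∀ j, w j * ‖z j - xstar j‖ ≤ B) →
      ∀ i, w i * ‖T z i - xstar i‖ ≤ c * B := by
    intro B z h i
    have h1 := hle (T z - xstar) i
    have h2 := hsup (z - xstar) B h
    exact h1.trans ((hcontr z).trans (mul_le_mul_of_nonneg_left h2 hc0.le))
  set B0 := bmNorm (x 0 - xstar) with hB0
  have hB0nn : 0 ≤ B0 := hnn _
  have hbase : ∀ k, ∀ i, w i * ‖x k i - xstar i‖ ≤ B0 := by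
    intro k
    induction k using Nat.strong_induction_on with
    | _ k ih =>
      intro i
      rcases k with _ | k
      · exact hle (x 0 - xstar) i
      · by_cases hk : k ∈ K i
        · rw [hupd k i hk]
          have := hstep B0 (fun j => x (s i j k) j)
            (fun j => ih _ (Nat.lt_succ_of_le (hs_le i j k)) j) i
          nlinarith
        · rw [hskip k i hk]
          exact ih k (Nat.lt_succ_self k) i
  have hind : ∀ n : ℕ, ∀ᶠ k in Filter.atTop, ∀ i, w i * ‖x k i - xstar i‖ ≤ c ^ n * B0 := by
    intro n
    induction n with
    | zero => exact Filter.Eventually.of_forall (fun k i => by simpa using hbase k i)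
    | succ n ih =>
      obtain ⟨N, hN⟩ := Filter.eventually_atTop.1 ih
      rw [Filter.eventually_all]
      intro i
      have h1 : ∀ᶠ k in Filter.atTop ⊓ Filter.principal (K i), ∀ j, N ≤ s i j k :=
        Filter.eventually_all.2 (fun j => (hslim i j).eventually_ge_atTop N)
      rw [Filter.eventually_inf_principal] at h1
      obtain ⟨M, hM⟩ := Filter.eventually_atTop.1 h1
      have hu : ∀ k, M ≤ k → k ∈ K i →
          w i * ‖x (k + 1) i - xstar i‖ ≤ c ^ (n + 1) * B0 := by
        intro k hk hkK
        rw [hupd k i hkK]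
        have := hstep (c ^ n * B0) (fun j => x (s i j k) j)
          (fun j => hN _ (hM k hk hkK j) j) i
        rw [pow_succ', mul_assoc]
        exact this
      obtain ⟨k0, hk0, hk0M⟩ := (hKinf i).exists_gt M
      refine Filter.eventually_atTop.2 ⟨k0 + 1, fun k hk => ?_⟩
      induction k, hk using Nat.le_induction with
      | base => exact hu k0 hk0M.le hk0
      | succ k hk ihk =>
        by_cases hkK : k ∈ K i
        · exact hu k (by omega) hkK
        · rw [hskip k i hkK]
          exact ihk
  have hlim : Filter.Tendsto (fun n : ℕ => c ^ n * B0) Filter.atTop (nhds 0) := by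
    simpa using (tendsto_pow_atTop_nhds_zero_of_lt_one hc0.le hc1).mul_const B0
  rw [tendsto_order]
  refine ⟨fun a ha => Filter.Eventually.of_forall (fun k => ha.trans_le (hnn _)), fun a ha => ?_⟩
  obtain ⟨n, hn⟩ := (hlim.eventually_lt_const ha).exists
  filter_upwards [hind n] with k hk
  exact (hsup _ _ hk).trans_lt hn
end

section
/- Consider the asynchronous fixed-point setting with T a pseudo-contraction with respect to the block-maximum norm with contraction modulus c ∈ (0,1) and fixed point x⋆. Assume partial asynchronism with parameters B, D ∈ ℕ₀: (1) for each i ∈ [m] and every k ≥ 0, at least one element of {k, k+1, …, k+B} belongs to K_i; (2) k − D ≤ s_{ij,k} ≤ k for all i, j ∈ [m] and all k ∈ K_i; (3) s_{ii,k} = k for all i ∈ [m] and k ∈ K_i. Then for all k ≥ 0, ‖x_k − x⋆‖ ≤ c^{k/(B+D+1)} · ‖x_0 − x⋆‖ in the block-maximum norm. -/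
/-- Theorem 6 (partial asynchronism): under bounded update intervals (`Bnd`)
and bounded delays (`Dnd`), the asynchronous iterates of a block-maximum-norm
pseudo-contraction with modulus `c` satisfy
`‖x_k − x⋆‖ ≤ c^{k/(B+D+1)} ‖x_0 − x⋆‖` in the block-maximum norm, where the
exponent is a real power (`Real.rpow`).  Each block is a finite-dimensional
real normed space; `k - Dnd` uses truncated natural subtraction. -/
theorem async_pseudocontraction_partial_asynchronism
    {m : ℕ} (hm : 0 < m)
    (Bl : Fin m → Type*) [∀ i, NormedAddCommGroup (Bl i)]
    [∀ i, NormedSpace ℝ (Bl i)] [∀ i, FiniteDimensional ℝ (Bl i)]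
    (w : Fin m → ℝ) (hw : ∀ i, 0 < w i)
    (bmNorm : (∀ i, Bl i) → ℝ)
    (hbm : ∀ z : ∀ i, Bl i, bmNorm z =
      (Finset.univ : Finset (Fin m)).sup'
        (Finset.univ_nonempty_iff.mpr ⟨⟨0, hm⟩⟩) (fun i => w i * ‖z i‖))
    (T : (∀ i, Bl i) → (∀ i, Bl i))
    (c : ℝ) (hc0 : 0 < c) (hc1 : c < 1)
    (xstar : ∀ i, Bl i) (hfix : T xstar = xstar)
    (hcontr : ∀ z, bmNorm (T z - xstar) ≤ c * bmNorm (z - xstar))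
    (K : Fin m → Set ℕ) (hK0 : ∀ i, 0 ∈ K i)
    (s : Fin m → Fin m → ℕ → ℕ)
    (hs_le : ∀ i j k, s i j k ≤ k)
    (x : ℕ → ∀ i, Bl i)
    (hupd : ∀ k : ℕ, ∀ i, k ∈ K i → x (k + 1) i = T (fun j => x (s i j k) j) i)
    (hskip : ∀ k : ℕ, ∀ i, k ∉ K i → x (k + 1) i = x k i)
    (Bnd Dnd : ℕ)
    (hupd_freq : ∀ i, ∀ k : ℕ, ∃ κ ∈ K i, k ≤ κ ∧ κ ≤ k + Bnd)
    (hdelay : ∀ i j, ∀ k ∈ K i, k - Dnd ≤ s i j k)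
    (hown : ∀ i, ∀ k ∈ K i, s i i k = k) :
    ∀ k : ℕ, bmNorm (x k - xstar) ≤
      c ^ ((k : ℝ) / ((Bnd : ℝ) + (Dnd : ℝ) + 1)) * bmNorm (x 0 - xstar) := by
  have hle : ∀ (z : ∀ i, Bl i) (i : Fin m), w i * ‖z i‖ ≤ bmNorm z := by
    intro z i
    rw [hbm]
    exact Finset.le_sup' (fun i => w i * ‖z i‖) (Finset.mem_univ i)
  have hub : ∀ (z : ∀ i, Bl i) (a : ℝ), (∀ i, w i * ‖z i‖ ≤ a) → bmNorm z ≤ a := by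
    intro z a h
    rw [hbm]
    exact Finset.sup'_le _ _ (fun i _ => h i)
  have hV0 : 0 ≤ bmNorm (x 0 - xstar) :=
    le_trans (mul_nonneg (hw ⟨0, hm⟩).le (norm_nonneg _)) (hle (x 0 - xstar) ⟨0, hm⟩)
  have hlast : ∀ (i : Fin m) (k : ℕ), ∃ κ ∈ K i, κ ≤ k ∧ x (k + 1) i = x (κ + 1) i ∧
      ∀ l, κ < l → l ≤ k → l ∉ K i := by
    intro i k
    induction k with
    | zero => exact ⟨0, hK0 i, le_rfl, rfl, fun l h1 h2 => by omega⟩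
    | succ k ih =>
      by_cases hk : k + 1 ∈ K i
      · exact ⟨k + 1, hk, le_rfl, rfl, fun l h1 h2 => by omega⟩
      · obtain ⟨κ, h1, h2, h3, h4⟩ := ih
        refine ⟨κ, h1, by omega, by rw [hskip _ _ hk, h3], fun l hl hl2 => ?_⟩
        rcases Nat.lt_or_ge k l with h | h
        · have : l = k + 1 := by omega
          rw [this]; exact hk
        · exact h4 l hl h
  have hN : (0 : ℝ) < (Bnd : ℝ) + (Dnd : ℝ) + 1 := by positivity
  intro k
  induction k using Nat.strong_induction_on with
  | _ k ih =>
    rcases k with _ | k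
    · simp
    · refine hub _ _ fun i => ?_
      obtain ⟨κ, h1, h2, h3, h4⟩ := hlast i k
      obtain ⟨l, hl, hl1, hl2⟩ := hupd_freq i (κ + 1)
      have hkl : k < l := by
        by_contra hcon
        exact h4 l (by omega) (by omega) hl
      have hT : w i * ‖(x (k + 1) - xstar) i‖ ≤
          c * bmNorm ((fun j => x (s i j κ) j) - xstar) := by
        have h := (hle _ i).trans (hcontr (fun j => x (s i j κ) j))
        rwa [Pi.sub_apply, ← hupd κ i h1, ← h3, ← Pi.sub_apply] at h
      refine hT.trans ?_
      have hz : bmNorm ((fun j => x (s i j κ) j) - xstar) ≤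
          c ^ ((((k + 1 : ℕ) : ℝ) / ((Bnd : ℝ) + (Dnd : ℝ) + 1)) - 1) *
            bmNorm (x 0 - xstar) := by
        refine hub _ _ fun j => ?_
        have hs := hs_le i j κ
        have hd := hdelay i j κ h1
        have h := (hle (x (s i j κ) - xstar) j).trans (ih (s i j κ) (by omega))
        refine h.trans (mul_le_mul_of_nonneg_right ?_ hV0)
        apply Real.rpow_le_rpow_of_exponent_ge hc0 hc1.le
        rw [sub_le_iff_le_add, div_add_one hN.ne']
        apply div_le_div_of_nonneg_right _ hN.le
        have : k + 1 ≤ s i j κ + (Bnd + Dnd + 1) := by omega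
        exact_mod_cast this
      calc c * bmNorm ((fun j => x (s i j κ) j) - xstar)
          ≤ c * (c ^ ((((k + 1 : ℕ) : ℝ) / ((Bnd : ℝ) + (Dnd : ℝ) + 1)) - 1) *
            bmNorm (x 0 - xstar)) := mul_le_mul_of_nonneg_left hz hc0.le
        _ = _ := by
          rw [Real.rpow_sub_one hc0.ne', ← mul_assoc, mul_div_cancel₀ _ hc0.ne']
end

section
/- Consider the asynchronous fixed-point setting with T a pseudo-contraction with respect to the block-maximum norm with contraction modulus c ∈ (0,1) and fixed point x⋆, and define τ_k = k − min_{i∈[m]} min_{j∈[m]} s_{ij, t_i(k)} where t_i(k) = max{κ : κ ≤ k and κ ∈ K_i}. Suppose there exists a function Λ : ℝ → ℝ such that (i) Λ(0) = 1, (ii) Λ is non-increasing, and (iii) lim_{k→∞} Λ(k) = 0 and c·Λ(k − τ_k) ≤ Λ(k+1) for all k ≥ 0. Then the iterates {x_k} of the asynchronous iteration satisfy ‖x_k − x⋆‖ ≤ Λ(k)·‖x_0 − x⋆‖ in the block-maximum norm for all k ≥ 1. -/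
/-- Theorem 7: convergence rate of asynchronous iterations of a
block-maximum-norm pseudo-contraction via a comparison function `Λ` satisfying
`Λ(0) = 1`, `Λ` non-increasing, `Λ(k) → 0` and `c·Λ(k − τ_k) ≤ Λ(k+1)`, where
`τ_k = k − min_i min_j s_{ij, t_i(k)}` and `t_i(k)` is the most recent update
time of agent `i`.  Then `‖x_k − x⋆‖ ≤ Λ(k)·‖x_0 − x⋆‖` (block-maximum norm)
for all `k ≥ 1`.  In the condition on `Λ : ℝ → ℝ`, `k − τ_k` is taken in `ℝ`. -/
theorem async_pseudocontraction_comparison_function_rate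
    {m : ℕ} (hm : 0 < m)
    (Bl : Fin m → Type*) [∀ i, NormedAddCommGroup (Bl i)]
    [∀ i, NormedSpace ℝ (Bl i)] [∀ i, FiniteDimensional ℝ (Bl i)]
    (w : Fin m → ℝ) (hw : ∀ i, 0 < w i)
    (bmNorm : (∀ i, Bl i) → ℝ)
    (hbm : ∀ z : ∀ i, Bl i, bmNorm z =
      (Finset.univ : Finset (Fin m)).sup'
        (Finset.univ_nonempty_iff.mpr ⟨⟨0, hm⟩⟩) (fun i => w i * ‖z i‖))
    (T : (∀ i, Bl i) → (∀ i, Bl i))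
    (c : ℝ) (hc0 : 0 < c) (hc1 : c < 1)
    (xstar : ∀ i, Bl i) (hfix : T xstar = xstar)
    (hcontr : ∀ z, bmNorm (T z - xstar) ≤ c * bmNorm (z - xstar))
    (K : Fin m → Set ℕ) (hK0 : ∀ i, 0 ∈ K i)
    (s : Fin m → Fin m → ℕ → ℕ)
    (hs_le : ∀ i j k, s i j k ≤ k)
    (x : ℕ → ∀ i, Bl i)
    (hupd : ∀ k : ℕ, ∀ i, k ∈ K i → x (k + 1) i = T (fun j => x (s i j k) j) i)
    (hskip : ∀ k : ℕ, ∀ i, k ∉ K i → x (k + 1) i = x k i)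
    (t : Fin m → ℕ → ℕ)
    (ht_mem : ∀ i k, t i k ≤ k ∧ t i k ∈ K i)
    (ht_max : ∀ i k κ, κ ≤ k → κ ∈ K i → κ ≤ t i k)
    (τk : ℕ → ℕ)
    (hτk : ∀ k, τk k = k -
      (Finset.univ : Finset (Fin m)).inf'
        (Finset.univ_nonempty_iff.mpr ⟨⟨0, hm⟩⟩)
        (fun i => (Finset.univ : Finset (Fin m)).inf'
          (Finset.univ_nonempty_iff.mpr ⟨⟨0, hm⟩⟩)
          (fun j => s i j (t i k))))
    (Λ : ℝ → ℝ)
    (hΛ0 : Λ 0 = 1)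
    (hΛmono : ∀ u v : ℝ, u ≤ v → Λ v ≤ Λ u)
    (hΛlim : Filter.Tendsto (fun k : ℕ => Λ k) Filter.atTop (nhds 0))
    (hΛrec : ∀ k : ℕ, c * Λ ((k : ℝ) - (τk k : ℝ)) ≤ Λ ((k : ℝ) + 1)) :
    ∀ k : ℕ, 1 ≤ k → bmNorm (x k - xstar) ≤ Λ k * bmNorm (x 0 - xstar) := by
  have hle : ∀ z : ∀ i, Bl i, ∀ i, w i * ‖z i‖ ≤ bmNorm z := by
    intro z i
    rw [hbm]
    exact Finset.le_sup' (fun i => w i * ‖z i‖) (Finset.mem_univ i)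
  have hub : ∀ (z : ∀ i, Bl i) (b : ℝ), (∀ i, w i * ‖z i‖ ≤ b) → bmNorm z ≤ b := by
    intro z b h
    rw [hbm]
    exact Finset.sup'_le _ _ (fun i _ => h i)
  have hD : 0 ≤ bmNorm (x 0 - xstar) :=
    le_trans (mul_nonneg (hw ⟨0, hm⟩).le (norm_nonneg _)) (hle _ ⟨0, hm⟩)
  have hlast : ∀ i k n, t i k ≤ n → n ≤ k → x (n + 1) i = x (t i k + 1) i := by
    intro i k n hn
    induction n, hn using Nat.le_induction with
    | base => intro _; rfl
    | succ n hn ih =>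
      intro hnk
      rw [← ih (by omega)]
      apply hskip
      intro hmem
      have := ht_max i k (n + 1) hnk hmem
      omega
  have hmin : ∀ (k : ℕ) (i j : Fin m), (k : ℝ) - (τk k : ℝ) ≤ (s i j (t i k) : ℝ) := by
    intro k i j
    have h1 : (Finset.univ : Finset (Fin m)).inf'
        (Finset.univ_nonempty_iff.mpr ⟨⟨0, hm⟩⟩)
        (fun i => (Finset.univ : Finset (Fin m)).inf'
          (Finset.univ_nonempty_iff.mpr ⟨⟨0, hm⟩⟩)
          (fun j => s i j (t i k))) ≤ s i j (t i k) :=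
      le_trans (Finset.inf'_le _ (Finset.mem_univ i)) (Finset.inf'_le _ (Finset.mem_univ j))
    have h2 := hτk k
    have h3 : s i j (t i k) ≤ k := (hs_le _ _ _).trans (ht_mem i k).1
    have h4 : k ≤ s i j (t i k) + τk k := by omega
    have h5 : (k : ℝ) ≤ (s i j (t i k) : ℝ) + (τk k : ℝ) := by exact_mod_cast h4
    linarith
  have main : ∀ k : ℕ, bmNorm (x k - xstar) ≤ Λ k * bmNorm (x 0 - xstar) := by
    intro k
    induction k using Nat.strong_induction_on with
    | _ k ih =>
      rcases k with _ | k
      · simp [hΛ0]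
      · apply hub
        intro i
        have e : x (k + 1) i = T (fun j => x (s i j (t i k)) j) i := by
          rw [hlast i k k (ht_mem i k).1 le_rfl]
          exact hupd _ _ (ht_mem i k).2
        have h1 := hle (T (fun j => x (s i j (t i k)) j) - xstar) i
        have h2 := hcontr (fun j => x (s i j (t i k)) j)
        have h3 : bmNorm ((fun j => x (s i j (t i k)) j) - xstar)
            ≤ Λ ((k : ℝ) - (τk k : ℝ)) * bmNorm (x 0 - xstar) := by
          apply hub
          intro j
          have h4 : s i j (t i k) < k + 1 :=
            Nat.lt_succ_of_le ((hs_le _ _ _).trans (ht_mem i k).1)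
          exact ((hle (x (s i j (t i k)) - xstar) j).trans (ih _ h4)).trans
            (mul_le_mul_of_nonneg_right (hΛmono _ _ (hmin k i j)) hD)
        have h5 := mul_le_mul_of_nonneg_left h3 hc0.le
        have h6 := mul_le_mul_of_nonneg_right (hΛrec k) hD
        rw [Pi.sub_apply] at h1 ⊢
        rw [e]
        push_cast
        linarith
  exact fun k _ => main k
end
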